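/- arXiv:0911.2569 — 4 statements merged into one kernel-verified Lean document; each statement's English description precedes it below -/
import Mathlib

section
/- Assume dim(R/I) ≤ 1 (Krull dimension) and that for every prime ideal p ⊇ I the localized ideal I·R_p can be generated by at most height(p)+1 elements. Then indeg(H_2) ≥ indeg(H_1) + d; explicitly, for every integer ν with (H_2)_ν ≠ 0 there exists an integer ν' ≤ ν − d with (H_1)_{ν'} ≠ 0. -/
/-!
Write `R = k[X_1, …, X_n]`. A skew-symmetric matrix `a` representing a class of `H₂` is a two-cycle
`z` of the Koszul complex of `f`, which is modelled by alternating forms on `R ^ (n + 1)` with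
contraction by `f` as differential. If `z` has degree `e + 2 d`, its rows are syzygies of degree
`e + d`. It is enough to show: when all rows of `a` are Koszul syzygies, `z` is a boundary.

Let `J` be the annihilator of the class of `z`. As `dim R / I ≤ 1`, the ideal `I` contains a weakly
regular sequence `rs` of length `n - 1` (`exists_isWeaklyRegular`). Consequently Koszul homology
vanishes in degrees at least three (`koszul_exact`), and in degree two a nonzerodivisor on `R / (rs)`
is a nonzerodivisor (`koszul_torsion_free`). So it suffices to find in `J` a nonzerodivisor on
`R / (rs)`; by prime avoidance, to see that `J` lies in no associated prime `p` of `R / (rs)`.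

* If `I` is not contained in `p`, this holds because `I` annihilates Koszul homology.
* If `I ⊆ p`, then `p` is not maximal (`not_isAssociatedPrime_of_isMaximal`), so its height is at
  most `n - 1` and `I` is generated at `p` by at most `n` elements. Hence some syzygy `u` of `f` has
  an entry `u l` outside `p` (`exists_syzygy_notMem`). As the row `l` of `a` is a Koszul syzygy and
  the third homology vanishes, `u l` annihilates the class of `z` (`smul_mem_boundaries_of_rows`).

The Cohen–Macaulay input, that maximal ideals are not associated to quotients by short regular
sequences, is derived from the Koszul complex too: a maximal ideal contains the weakly regular
sequence of the monic polynomials `h_i(X_i)` supplied by the Nullstellensatz.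
-/

open MvPolynomial

noncomputable section

/-- The (first) Koszul boundaries `B₁ ⊆ R^{n+1}`: the submodule generated by the
Koszul syzygies `f_i e_j - f_j e_i` for `i < j`. -/
def koszulB1 {k : Type*} [Field k] {n : ℕ}
    (f : Fin (n+1) → MvPolynomial (Fin n) k) :
    Submodule (MvPolynomial (Fin n) k) (Fin (n+1) → MvPolynomial (Fin n) k) :=
  Submodule.span (MvPolynomial (Fin n) k)
    {v | ∃ i j : Fin (n+1), i < j ∧ v = Pi.single j (f i) - Pi.single i (f j)}

/-- `(H₁)_ν ≠ 0`: there is a syzygy `a` of `f`, homogeneous of degree `ν` (i.e. with all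
components homogeneous of degree `ν - d`), which is not a Koszul boundary. -/
def H1Nonzero {k : Type*} [Field k] {n : ℕ}
    (f : Fin (n+1) → MvPolynomial (Fin n) k) (d ν : ℕ) : Prop :=
  ∃ a : Fin (n+1) → MvPolynomial (Fin n) k, ∃ e : ℕ, ν = e + d ∧
    (∀ i, (a i).IsHomogeneous e) ∧ (∑ i, a i * f i) = 0 ∧ a ∉ koszulB1 f

/-- Membership in the (second) Koszul boundaries `B₂`: the matrix `a` has the form
`a i j = ∑ l, b l i j * f l` with `b` alternating in its three indices. -/
def InKoszulB2 {k : Type*} [Field k] {n : ℕ}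
    (f : Fin (n+1) → MvPolynomial (Fin n) k)
    (a : Fin (n+1) → Fin (n+1) → MvPolynomial (Fin n) k) : Prop :=
  ∃ b : Fin (n+1) → Fin (n+1) → Fin (n+1) → MvPolynomial (Fin n) k,
    (∀ i j l, b i j l = - b j i l) ∧ (∀ i j l, b i j l = - b i l j) ∧
    (∀ i j l, i = j ∨ j = l ∨ i = l → b i j l = 0) ∧
    (∀ i j, a i j = ∑ l, b l i j * f l)

/-- `(H₂)_ν ≠ 0`: there is a skew-symmetric matrix `a` over `R`, with all entries
homogeneous of degree `ν - 2d`, satisfying `∑ i, a i j * f i = 0` for all `j`, and which is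
not a boundary. -/
def H2Nonzero {k : Type*} [Field k] {n : ℕ}
    (f : Fin (n+1) → MvPolynomial (Fin n) k) (d ν : ℕ) : Prop :=
  ∃ a : Fin (n+1) → Fin (n+1) → MvPolynomial (Fin n) k, ∃ e : ℕ, ν = e + 2 * d ∧
    (∀ i j, (a i j).IsHomogeneous e) ∧
    (∀ i j, a i j = - a j i) ∧ (∀ i, a i i = 0) ∧
    (∀ j, (∑ i, a i j * f i) = 0) ∧ ¬ InKoszulB2 f a

/-! ### The Koszul complex and depth -/

section Koszul
open RingTheory.Sequence AlternatingMap Pointwise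

variable {R : Type*} [CommRing R] {N : ℕ}

/-- Degree `i` of the Koszul complex of an `N`-element sequence with coefficients in `M`,
encoded as the alternating `i`-forms on `R ^ N` with values in `M`. The sequence
`f : Fin N → R` enters only through the differential `a ↦ a.curryLeft f`, that is, contraction
with the vector `f`, which lowers the degree by one. -/
abbrev Kos (R : Type*) [CommRing R] (N : ℕ) (M : Type*) [AddCommGroup M] [Module R M] (i : ℕ) :=
  (Fin N → R) [⋀^Fin i]→ₗ[R] M

variable {M : Type*} [AddCommGroup M] [Module R M]

/-- Exterior multiplication of a form by the linear functional `c`. -/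
def wedge (c : (Fin N → R) →ₗ[R] R) {i : ℕ} (a : Kos R N M i) : Kos R N M (i + 1) :=
  alternatizeUncurryFin (LinearMap.toSpanSingleton R _ a ∘ₗ c)

/-- Contraction with a vector is an antiderivation for exterior multiplication. -/
lemma curryLeft_wedge (c : (Fin N → R) →ₗ[R] R) {i : ℕ} (a : Kos R N M (i + 1))
    (x : Fin N → R) :
    (wedge c a).curryLeft x = c x • a - wedge c (a.curryLeft x) := by
  ext v
  simp only [wedge, curryLeft_apply_apply, alternatizeUncurryFin_apply, LinearMap.comp_apply,
    LinearMap.toSpanSingleton_apply, AlternatingMap.smul_apply, AlternatingMap.sub_apply]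
  rw [Fin.sum_univ_succ, sub_eq_add_neg, ← Finset.sum_neg_distrib]
  congr 1
  · simp [Matrix.vecCons]
  · refine Finset.sum_congr rfl fun j _ => ?_
    have : Fin.removeNth j.succ (Matrix.vecCons x v) = Matrix.vecCons x (Fin.removeNth j v) := by
      ext l
      refine Fin.cases ?_ (fun l => ?_) l <;> simp [Fin.removeNth, Matrix.vecCons]
    rw [this]
    simp [pow_succ]

lemma curryLeft_curryLeft_swap {i : ℕ} (a : Kos R N M (i + 2)) (x y : Fin N → R) :
    (a.curryLeft x).curryLeft y = -(a.curryLeft y).curryLeft x := by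
  have h := curryLeft_same a (x + y)
  simp only [map_add, curryLeft_add, LinearMap.add_apply, curryLeft_same, zero_add, add_zero] at h
  exact eq_neg_of_add_eq_zero_right h

lemma curryLeft_sub' {i : ℕ} (a b : Kos R N M (i + 1)) (x : Fin N → R) :
    (a - b).curryLeft x = a.curryLeft x - b.curryLeft x := rfl

/-- Koszul cochains lift along surjections of coefficients, since exterior powers of `R ^ N` are
projective. -/
lemma exists_lift {M' : Type*} [AddCommGroup M'] [Module R M'] (π : M →ₗ[R] M')
    (hπ : Function.Surjective π) {i : ℕ} (a : Kos R N M' i) :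
    ∃ b : Kos R N M i, π.compAlternatingMap b = a := by
  obtain ⟨h, hh⟩ := Module.projective_lifting_property π
    (exteriorPower.alternatingMapLinearEquiv a) hπ
  refine ⟨exteriorPower.alternatingMapLinearEquiv.symm h, ?_⟩
  apply exteriorPower.alternatingMapLinearEquiv.injective
  rw [exteriorPower.alternatingMapLinearEquiv_comp, LinearEquiv.apply_symm_apply, hh]

lemma exists_eq_smul (r : R) {i : ℕ} (a : Kos R N M i)
    (ha : (Submodule.mkQ (r • ⊤ : Submodule R M)).compAlternatingMap a = 0) :
    ∃ b : Kos R N M i, a = r • b := by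
  have h1 : ∀ v, a v ∈ LinearMap.range (LinearMap.lsmul R M r) := by
    intro v
    have := DFunLike.congr_fun ha v
    simp only [LinearMap.compAlternatingMap_apply, Submodule.mkQ_apply, AlternatingMap.zero_apply,
      Submodule.Quotient.mk_eq_zero] at this
    obtain ⟨m, -, hm⟩ := this
    exact ⟨m, hm⟩
  obtain ⟨b, hb⟩ := exists_lift (LinearMap.lsmul R M r).rangeRestrict
    (LinearMap.surjective_rangeRestrict _) (a.codRestrict _ h1)
  refine ⟨b, ?_⟩
  ext v
  exact (congrArg Subtype.val (DFunLike.congr_fun hb v)).symm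

lemma kos_smul_injective {r : R} (hr : IsSMulRegular M r) {i : ℕ} {a b : Kos R N M i}
    (h : r • a = r • b) : a = b := by
  ext v
  exact hr (DFunLike.congr_fun h v)

lemma mkQ_smul_eq_zero (r : R) {i : ℕ} (a : Kos R N M i) :
    (Submodule.mkQ (r • ⊤ : Submodule R M)).compAlternatingMap (r • a) = 0 := by
  ext v
  simp only [LinearMap.compAlternatingMap_apply, Submodule.mkQ_apply, AlternatingMap.zero_apply,
      Submodule.Quotient.mk_eq_zero]
  exact ⟨a v, trivial, rfl⟩

lemma kos_eq_zero {i : ℕ} (hi : N < i) (a : Kos R N M i) : a = 0 := by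
  refine Module.Basis.ext_alternating (Pi.basisFun R (Fin N)) fun v hv => ?_
  have := Fintype.card_le_of_injective v hv
  simp at this
  omega

/-- Every element `c f` of the ideal generated by `f` annihilates Koszul homology. -/
lemma smul_mem_boundaries (f : Fin N → R) (c : (Fin N → R) →ₗ[R] R) {i : ℕ}
    (a : Kos R N M (i + 1)) (ha : a.curryLeft f = 0) :
    (wedge c a).curryLeft f = c f • a := by
  rw [curryLeft_wedge, ha]
  have : wedge c (0 : Kos R N M i) = 0 := by
    ext v; simp [wedge, alternatizeUncurryFin_apply]
  rw [this, sub_zero]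

/-- Let `r` be `M`-regular and `r • a = ∂ b`. If the reduction of `b` modulo `r` is a boundary,
then so is `a`: subtracting from `b` the boundary of a lift leaves a multiple `r • e` with
`r • ∂ e = r • a`. In other words, the connecting map
`H_{i+2}(f; M / r M) → H_{i+1}(f; M)`, which sends the class of `b` to that of `a`, is well defined. -/
lemma exists_boundary_of_reduction (f : Fin N → R) {r : R} (hr : IsSMulRegular M r) {i : ℕ}
    {a : Kos R N M (i + 1)} {b : Kos R N M (i + 2)} (hb : b.curryLeft f = r • a)
    {c : Kos R N (QuotSMulTop r M) (i + 3)}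
    (hc : c.curryLeft f = (Submodule.mkQ (r • ⊤ : Submodule R M)).compAlternatingMap b) :
    ∃ e : Kos R N M (i + 2), e.curryLeft f = a := by
  obtain ⟨c', rfl⟩ := exists_lift (Submodule.mkQ (r • ⊤ : Submodule R M))
    (Submodule.mkQ_surjective _) c
  obtain ⟨e, he⟩ := exists_eq_smul r (b - c'.curryLeft f) (by
    rw [curryLeft_compAlternatingMap] at hc
    ext v
    have := DFunLike.congr_fun hc v
    simp only [LinearMap.compAlternatingMap_apply] at this
    simp only [LinearMap.compAlternatingMap_apply, AlternatingMap.sub_apply, map_sub, this,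
      sub_self, AlternatingMap.zero_apply])
  refine ⟨e, kos_smul_injective hr ?_⟩
  have := congrArg (fun t : Kos R N M (i + 2) => t.curryLeft f) he
  simp only [curryLeft_sub', curryLeft_same, sub_zero, hb, curryLeft_smul] at this
  exact this.symm

/-- Depth sensitivity of the Koszul complex: if the ideal of `f` contains a weakly `M`-regular
sequence of length `g`, then the Koszul homology with coefficients in `M` vanishes in all
positive degrees `> N - g`. -/
lemma koszul_exact (f : Fin N → R) (rs : List R)
    (hmem : ∀ r ∈ rs, ∃ c : (Fin N → R) →ₗ[R] R, c f = r)
    {M : Type*} [AddCommGroup M] [Module R M] (hreg : IsWeaklyRegular M rs) (i : ℕ)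
    (hi : N < i + 1 + rs.length) (a : Kos R N M (i + 1)) (ha : a.curryLeft f = 0) :
    ∃ b : Kos R N M (i + 2), b.curryLeft f = a := by
  induction rs generalizing M i with
  | nil => exact ⟨0, by rw [kos_eq_zero (by simpa using hi) a]; rfl⟩
  | cons r rs ih =>
    rw [isWeaklyRegular_cons_iff] at hreg
    obtain ⟨c, hc⟩ := hmem r (by simp)
    have hb := smul_mem_boundaries f c a ha
    rw [hc] at hb
    obtain ⟨e, he⟩ := ih (fun r hr => hmem r (by simp [hr])) hreg.2 (i + 1)
      (by simp at hi; omega)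
      ((Submodule.mkQ (r • ⊤ : Submodule R M)).compAlternatingMap (wedge c a)) (by
        rw [curryLeft_compAlternatingMap, hb, mkQ_smul_eq_zero])
    exact exists_boundary_of_reduction f hreg.1 hb he

/-- In the top possibly nonzero degree `N - g`, Koszul homology embeds into
`{x ∈ M / rs M | f x = 0}`, where `rs` is a weakly regular sequence of length `g` in the ideal of
`f`. Hence an element `s` that is regular on `M / rs M` is a nonzerodivisor on it. -/
lemma koszul_torsion_free (f : Fin N → R) (s : R) (rs : List R)
    (hmem : ∀ r ∈ rs, ∃ c : (Fin N → R) →ₗ[R] R, c f = r)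
    {M : Type*} [AddCommGroup M] [Module R M] (hreg : IsWeaklyRegular M (rs ++ [s])) (i : ℕ)
    (hi : N = i + 1 + rs.length) (a : Kos R N M (i + 1)) (ha : a.curryLeft f = 0)
    (b' : Kos R N M (i + 2)) (hb' : b'.curryLeft f = s • a) :
    ∃ b : Kos R N M (i + 2), b.curryLeft f = a := by
  induction rs generalizing M i with
  | nil =>
    refine ⟨0, ?_⟩
    rw [kos_eq_zero (by simp at hi; omega) b'] at hb'
    rw [List.nil_append, isWeaklyRegular_singleton_iff] at hreg
    refine kos_smul_injective hreg ?_
    rw [← hb']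
    ext v; simp
  | cons r rs ih =>
    have hreg' := ((isWeaklyRegular_append_iff M _ _).1 hreg).1
    rw [List.cons_append, isWeaklyRegular_cons_iff] at hreg
    obtain ⟨c, hc⟩ := hmem r (by simp)
    have hb := smul_mem_boundaries f c a ha
    rw [hc] at hb
    obtain ⟨t, ht⟩ := koszul_exact f _ hmem hreg' (i + 1) (by omega)
      (s • wedge c a - r • b') (by
        rw [curryLeft_sub', curryLeft_smul, curryLeft_smul, LinearMap.smul_apply,
          LinearMap.smul_apply, hb, hb', smul_comm, sub_self])
    obtain ⟨e, he⟩ := ih (fun r hr => hmem r (by simp [hr])) hreg.2 (i + 1)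
      (by simp at hi; omega)
      ((Submodule.mkQ (r • ⊤ : Submodule R M)).compAlternatingMap (wedge c a)) (by
        rw [curryLeft_compAlternatingMap, hb, mkQ_smul_eq_zero])
      ((Submodule.mkQ (r • ⊤ : Submodule R M)).compAlternatingMap t) (by
        rw [curryLeft_compAlternatingMap, ht]
        have := mkQ_smul_eq_zero r b'
        ext v
        have := DFunLike.congr_fun this v
        simp only [LinearMap.compAlternatingMap_apply, AlternatingMap.zero_apply] at this
        rw [LinearMap.compAlternatingMap_apply, AlternatingMap.sub_apply, map_sub, this, sub_zero]
        simp)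
    exact exists_boundary_of_reduction f hreg.1 hb he

/-- Conversely to depth sensitivity, when the Koszul homology in degree `N - g` vanishes, no
nonzero element of `M / rs M` is annihilated by `f`. -/
lemma socle_eq_zero (f : Fin N → R) (rs : List R)
    (hmem : ∀ r ∈ rs, ∃ c : (Fin N → R) →ₗ[R] R, c f = r)
    {M : Type*} [AddCommGroup M] [Module R M] (hreg : IsWeaklyRegular M rs) (i : ℕ)
    (hi : N = i + 1 + rs.length)
    (hex : ∀ a : Kos R N M (i + 1), a.curryLeft f = 0 →
      ∃ b : Kos R N M (i + 2), b.curryLeft f = a)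
    (x : M ⧸ (Ideal.ofList rs • ⊤ : Submodule R M)) (hx : ∀ l, f l • x = 0) : x = 0 := by
  induction rs generalizing M i with
  | nil =>
    obtain ⟨y, rfl⟩ := Submodule.mkQ_surjective _ x
    have hI : (Ideal.ofList ([] : List R) • ⊤ : Submodule R M) = ⊥ := by simp
    have key : ∀ y : M, Submodule.mkQ (Ideal.ofList ([] : List R) • ⊤ : Submodule R M) y = 0 ↔
      y = 0 := by
      intro y
      rw [Submodule.mkQ_apply, Submodule.Quotient.mk_eq_zero, hI, Submodule.mem_bot]
    rw [key]
    have hy : ∀ l, f l • y = 0 := fun l => by rw [← key, map_smul]; exact hx l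
    simp only [List.length_nil, add_zero] at hi
    subst hi
    -- For `rs = []` the degree is `N`: the determinant form with value `y` is a cycle because `f`
    -- kills `y`, and there are no nonzero forms of degree `N + 1` to bound it.
    let D : Kos R (i + 1) M (i + 1) :=
      (LinearMap.toSpanSingleton R M y).compAlternatingMap (Pi.basisFun R (Fin (i + 1))).det
    obtain ⟨b, hb⟩ := hex D (by
      have hf : f = ∑ l, f l • (Pi.single l 1 : Fin (i + 1) → R) := by
        ext j; simp [Finset.sum_apply, Pi.single_apply]
      have : D.curryLeft f = ∑ l, f l • D.curryLeft (Pi.single l 1) := by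
        conv_lhs => rw [hf]
        simp
      rw [this]
      refine Finset.sum_eq_zero fun l _ => ?_
      ext v
      simp only [AlternatingMap.smul_apply, AlternatingMap.zero_apply, curryLeft_apply_apply, D,
        LinearMap.compAlternatingMap_apply, LinearMap.toSpanSingleton_apply]
      rw [smul_comm, hy, smul_zero])
    rw [kos_eq_zero (by omega) b] at hb
    have := DFunLike.congr_fun hb (fun j => Pi.basisFun R (Fin (i + 1)) j)
    have hdet : (Pi.basisFun R (Fin (i + 1))).det (fun j => Pi.basisFun R (Fin (i + 1)) j) = 1 :=
      Module.Basis.det_self _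
    simp only [D, LinearMap.compAlternatingMap_apply, LinearMap.toSpanSingleton_apply, hdet,
      one_smul] at this
    exact this.symm
  | cons r rs ih =>
    have hreg0 := hreg
    rw [isWeaklyRegular_cons_iff] at hreg
    let e := Submodule.quotOfListConsSMulTopEquivQuotSMulTopInner M r rs
    apply e.injective
    rw [_root_.map_zero]
    refine ih (fun r hr => hmem r (by simp [hr])) hreg.2 (i + 1) (by simp at hi; omega) ?_ (e x)
      (fun l => by rw [← map_smul, hx, _root_.map_zero])
    intro b' hb'
    obtain ⟨b, rfl⟩ := exists_lift (Submodule.mkQ (r • ⊤ : Submodule R M))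
      (Submodule.mkQ_surjective _) b'
    rw [curryLeft_compAlternatingMap] at hb'
    obtain ⟨a, ha⟩ := exists_eq_smul r _ hb'
    obtain ⟨t, ht⟩ := hex a (kos_smul_injective hreg.1 (by
      have := curryLeft_same b f
      rw [ha, curryLeft_smul, LinearMap.smul_apply] at this
      rw [this]; ext v; simp))
    obtain ⟨u, hu⟩ := koszul_exact f _ hmem hreg0 (i + 1) (by omega) (b - r • t) (by
      rw [curryLeft_sub', curryLeft_smul, LinearMap.smul_apply, ht, ha, sub_self])
    refine ⟨(Submodule.mkQ (r • ⊤ : Submodule R M)).compAlternatingMap u, ?_⟩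
    rw [curryLeft_compAlternatingMap, hu]
    ext v
    have := DFunLike.congr_fun (mkQ_smul_eq_zero r t) v
    simp only [LinearMap.compAlternatingMap_apply, AlternatingMap.zero_apply] at this
    simp only [LinearMap.compAlternatingMap_apply, AlternatingMap.sub_apply, map_sub, this,
          sub_zero]

/-- If the contraction of a two-cycle `z` with the basis vector `e_l` is a boundary and `u` is a
syzygy of `f`, then `u l • z` is a boundary, provided the complex is exact in degree three. With
`c` the functional given by `u`, the form `c ∧ z` is a cycle, hence `c ∧ z = ∂ y`; contracting with
`e_l` gives `u l • z = ι_{e_l} ∂ y + c ∧ ι_{e_l} z`, and both terms are boundaries. -/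
lemma smul_mem_boundaries_of_rows (f u : Fin N → R) (hu : ∑ l, u l * f l = 0) (l : Fin N)
    (hex : ∀ a : Kos R N M 3, a.curryLeft f = 0 → ∃ b : Kos R N M 4, b.curryLeft f = a)
    (z : Kos R N M 2) (hz : z.curryLeft f = 0)
    (w : Kos R N M 2) (hw : w.curryLeft f = z.curryLeft (Pi.single l 1)) :
    ∃ b : Kos R N M 3, b.curryLeft f = u l • z := by
  let c : (Fin N → R) →ₗ[R] R := ∑ i, u i • LinearMap.proj i
  have hcf : c f = 0 := by simpa [c] using hu
  have hcl : c (Pi.single l 1) = u l := by simp [c, Pi.single_apply]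
  obtain ⟨y, hy⟩ := hex (wedge c z) (by rw [smul_mem_boundaries f c z hz, hcf, zero_smul])
  have h1 := curryLeft_wedge c z (Pi.single l 1)
  have h2 := curryLeft_wedge c w f
  rw [hcl, ← hw, ← hy, curryLeft_curryLeft_swap] at h1
  rw [hcf, zero_smul, zero_sub] at h2
  refine ⟨-(y.curryLeft (Pi.single l 1)) - wedge c w, ?_⟩
  rw [curryLeft_sub', h2]
  have h3 : (-(y.curryLeft (Pi.single l 1))).curryLeft f =
    -((y.curryLeft (Pi.single l 1)).curryLeft f) := rfl
  rw [h3, h1]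
  abel
end Koszul

/-! ### Maximal ideals of the polynomial ring -/

section Poly
open RingTheory.Sequence Pointwise Polynomial

/-- A weakly regular sequence of `A`, preceded by a monic polynomial `h`, is weakly regular on
`A[X]`, because `A[X] / (h)` is free over `A`. -/
lemma isWeaklyRegular_monic_cons {A : Type*} [CommRing A] {rs : List A} (hrs : IsWeaklyRegular A rs)
    {h : A[X]} (hh : h.Monic) : IsWeaklyRegular A[X] (h :: rs.map (algebraMap A A[X])) := by
  rw [isWeaklyRegular_cons_iff]
  refine ⟨fun a b hab => hh.isRegular.left hab, ?_⟩
  rw [isWeaklyRegular_map_algebraMap_iff]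
  have hE : (h • ⊤ : Submodule A[X] A[X]) = Ideal.span {h} := by
    rw [← Submodule.ideal_span_singleton_smul, smul_eq_mul, Ideal.mul_top]
  let e : QuotSMulTop h A[X] ≃ₗ[A[X]] (A[X] ⧸ Ideal.span {h}) := Submodule.quotEquivOfEq _ _ hE
  have : Module.Free A (A[X] ⧸ Ideal.span {h}) := hh.free_adjoinRoot
  have : Module.Flat A (QuotSMulTop h A[X]) :=
    Module.Flat.of_linearEquiv (e.restrictScalars A)
  exact ((TensorProduct.lid A (QuotSMulTop h A[X])).isWeaklyRegular_congr rs).1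
    hrs.isWeaklyRegular_rTensor

/-- Monic polynomials `h_i(X_i)`, one in each variable, form a weakly regular sequence. -/
lemma isWeaklyRegular_aeval_X {k : Type*} [Field k] : ∀ (n : ℕ) (h : Fin n → k[X])
    (_ : ∀ i, (h i).Monic),
    IsWeaklyRegular (MvPolynomial (Fin n) k)
      (List.ofFn fun i => Polynomial.aeval (MvPolynomial.X i : MvPolynomial (Fin n) k) (h i))
  | 0, h, _ => by simp
  | n + 1, h, hm => by
    have ih := isWeaklyRegular_aeval_X n (fun i => h i.succ) (fun i => hm i.succ)
    have h1 := isWeaklyRegular_monic_cons ih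
      ((hm 0).map (algebraMap k (MvPolynomial (Fin n) k)))
    let e := MvPolynomial.finSuccEquiv k n
    refine (e.toRingEquiv.toAddEquiv.isWeaklyRegular_congr (bs := _) ?_).2 h1
    rw [List.ofFn_succ, List.map_ofFn]
    refine List.Forall₂.cons ?_ ?_
    · intro x
      have : e (Polynomial.aeval (MvPolynomial.X 0) (h 0)) =
          (h 0).map (algebraMap k (MvPolynomial (Fin n) k)) := by
        rw [← Polynomial.aeval_algHom_apply]
        simp only [e, MvPolynomial.finSuccEquiv_X_zero]
        rw [← Polynomial.aeval_map_algebraMap (MvPolynomial (Fin n) k), Polynomial.aeval_X_left_apply]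
      change e (_ * x) = _ * e x
      rw [map_mul, this]
    · rw [List.forall₂_iff_get]
      refine ⟨by simp, ?_⟩
      intro i hi hi' x
      simp only [List.get_ofFn, Function.comp]
      set j : Fin n := Fin.cast (by simp) (⟨i, hi⟩ : Fin _) with hj
      have : ∀ j : Fin n, e (Polynomial.aeval (MvPolynomial.X j.succ) (h j.succ)) =
          algebraMap (MvPolynomial (Fin n) k) _
            (Polynomial.aeval (MvPolynomial.X j) (h j.succ)) := by
        intro j
        rw [← Polynomial.aeval_algHom_apply, ← Polynomial.aeval_algebraMap_apply]
        simp only [e, MvPolynomial.finSuccEquiv_X_succ]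
        rfl
      change e (_ * x) = _ * e x
      rw [map_mul]
      congr 1
      exact this j

/-- By the Nullstellensatz, a maximal ideal contains a monic polynomial in each single variable. -/
lemma exists_monic_aeval_X_mem {k : Type*} [Field k] {n : ℕ}
    (q : Ideal (MvPolynomial (Fin n) k)) [hq : q.IsMaximal] (i : Fin n) :
    ∃ h : k[X], h.Monic ∧ Polynomial.aeval (MvPolynomial.X i) h ∈ q := by
  let _ := Ideal.Quotient.field q
  have : Module.Finite k (MvPolynomial (Fin n) k ⧸ q) :=
    finite_of_finite_type_of_isJacobsonRing _ _
  obtain ⟨h, hm, hh⟩ := Algebra.IsIntegral.isIntegral (R := k)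
    (Ideal.Quotient.mkₐ k q (MvPolynomial.X i))
  refine ⟨h, hm, ?_⟩
  rw [← Ideal.Quotient.eq_zero_iff_mem]
  have : Ideal.Quotient.mkₐ k q (Polynomial.aeval (MvPolynomial.X i) h) = 0 := by
    rw [← Polynomial.aeval_algHom_apply]
    exact hh
  exact this

lemma exists_linear_of_mem_span {R : Type*} [CommRing R] {N : ℕ} (f : Fin N → R) {r : R}
    (hr : r ∈ Ideal.span (Set.range f)) : ∃ c : (Fin N → R) →ₗ[R] R, c f = r := by
  obtain ⟨c, hc⟩ := Ideal.mem_span_range_iff_exists_fun.1 hr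
  exact ⟨∑ i, c i • LinearMap.proj i, by simpa using hc⟩

/-- A maximal ideal `q` of `k[X_1, …, X_n]` is not associated to the quotient by a weakly regular
sequence of fewer than `n` elements of `q`. The ideal `q` contains a weakly regular sequence of
length `n`, so by depth sensitivity the Koszul homology of generators of `q` vanishes in degrees
where an element of the quotient annihilated by `q` would make it nonzero. This is the
substitute for the Cohen–Macaulay property of the polynomial ring. -/
lemma not_isAssociatedPrime_of_isMaximal {k : Type*} [Field k] {n : ℕ}
    (q : Ideal (MvPolynomial (Fin n) k)) [hq : q.IsMaximal]
    (rs : List (MvPolynomial (Fin n) k)) (hreg : IsWeaklyRegular (MvPolynomial (Fin n) k) rs)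
    (hmem : ∀ r ∈ rs, r ∈ q) (hlen : rs.length < n) :
    ¬ IsAssociatedPrime q (MvPolynomial (Fin n) k ⧸
      (Ideal.ofList rs • ⊤ : Submodule (MvPolynomial (Fin n) k) (MvPolynomial (Fin n) k))) := by
  intro hass
  rw [isAssociatedPrime_iff] at hass
  obtain ⟨hp, x, hx⟩ := hass
  obtain ⟨m, g, hg⟩ := Submodule.fg_iff_exists_fin_generating_family.1 (IsNoetherian.noetherian q)
  -- The `n` zeros appended to the generators keep the degree `m + n - rs.length - 1` used below
  -- from being truncated.
  let f : Fin (m + n) → MvPolynomial (Fin n) k := Fin.append g 0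
  have hf : Ideal.span (Set.range f) = q := by
    apply le_antisymm
    · rw [Ideal.span_le]
      rintro _ ⟨i, rfl⟩
      refine Fin.addCases (fun i => ?_) (fun i => ?_) i
      · simp only [f, Fin.append_left]
        rw [← hg]
        exact Submodule.subset_span ⟨i, rfl⟩
      · simp [f]
    · rw [← hg]
      refine Submodule.span_mono ?_
      rintro _ ⟨i, rfl⟩
      exact ⟨Fin.castAdd n i, by simp [f]⟩
  choose h hm hh using exists_monic_aeval_X_mem q
  have hR := isWeaklyRegular_aeval_X n h hm
  have h0 : x = 0 := by
    refine socle_eq_zero f rs (fun r hr => exists_linear_of_mem_span f (by rw [hf]; exact hmem r hr))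
      hreg (m + n - rs.length - 1) (by omega) ?_ x ?_
    · intro a ha
      refine koszul_exact f _ (fun r hr => exists_linear_of_mem_span f ?_) hR _ ?_ a ha
      · rw [hf]
        rw [List.mem_ofFn] at hr
        obtain ⟨i, rfl⟩ := hr
        exact hh i
      · simp; omega
    · intro l
      have : f l ∈ q := hf ▸ Ideal.subset_span ⟨l, rfl⟩
      rw [hx, Submodule.mem_colon_singleton] at this
      simpa using this
  subst h0
  apply hp.ne_top
  rw [hx]
  simp
end Poly

/-! ### Regular sequences in ideals of dimension at most one -/

section Depth
open RingTheory.Sequence Pointwise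

lemma exists_isSMulRegular_mem {R M : Type*} [CommRing R] [IsNoetherianRing R] [AddCommGroup M]
    [Module R M] [Module.Finite R M] (J : Ideal R)
    (hJ : ∀ p, IsAssociatedPrime p M → ¬ J ≤ p) : ∃ s ∈ J, IsSMulRegular M s := by
  by_contra! h
  have hsub : (J : Set R) ⊆ ⋃ p ∈ associatedPrimes R M, (p : Set R) := by
    rw [biUnion_associatedPrimes_eq_compl_regular R M]
    exact fun x hx hx' => h x hx hx'
  obtain ⟨p, hp, hJp⟩ := (J.subset_union_prime_finite (associatedPrimes.finite R M)
    (f := id) 0 0 fun _ h _ _ => h.isPrime).1 hsub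
  exact hJ p hp hJp

/-- If `p` is associated to `M` and `y` is `M`-regular, lying in some prime that contains `p`, then
`M / y M` has an associated prime containing `p` and `y`. By Nakayama's lemma the submodule `L` of
elements killed by `p` is not `y L`, and an element of `L` outside `y L` stays nonzero in `M / y M`. -/
lemma exists_isAssociatedPrime_quotSMulTop {R M : Type*} [CommRing R] [IsNoetherianRing R]
    [AddCommGroup M] [Module R M] [Module.Finite R M] {p q : Ideal R} (hp : IsAssociatedPrime p M)
    {y : R} (hy : IsSMulRegular M y) (hq : q.IsPrime) (hpq : p ≤ q) (hyq : y ∈ q) :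
    ∃ q', IsAssociatedPrime q' (QuotSMulTop y M) ∧ p ≤ q' ∧ y ∈ q' := by
  have hp' := hp
  rw [isAssociatedPrime_iff] at hp'
  obtain ⟨hpp, x, hx⟩ := hp'
  let L : Submodule R M := Submodule.torsionBySet R M p
  have hxL : x ∈ L := by
    rw [Submodule.mem_torsionBySet_iff]
    rintro ⟨a, ha⟩
    have ha' : a ∈ p := ha
    rw [hx, Submodule.mem_colon_singleton] at ha'
    simpa using ha'
  have hL : ¬ L ≤ Ideal.span {y} • L := by
    intro h
    obtain ⟨r, hr, hr'⟩ := Submodule.exists_sub_one_mem_and_smul_eq_zero_of_fg_of_le_smul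
      (Ideal.span {y}) L (IsNoetherian.noetherian L) h
    have h1 : r ∈ p := by
      rw [hx, Submodule.mem_colon_singleton]
      simpa using hr' x hxL
    have h2 : r - 1 ∈ q := (Ideal.span_singleton_le_iff_mem _).2 hyq hr
    apply hq.ne_top
    rw [Ideal.eq_top_iff_one]
    have := q.sub_mem (hpq h1) h2
    simpa using this
  obtain ⟨m, hm, hm'⟩ := SetLike.not_le_iff_exists.1 hL
  have hm0 : (Submodule.Quotient.mk m : QuotSMulTop y M) ≠ 0 := by
    rw [Ne, Submodule.Quotient.mk_eq_zero, Submodule.mem_smul_pointwise_iff_exists]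
    rintro ⟨m', -, rfl⟩
    apply hm'
    refine Submodule.smul_mem_smul (Ideal.mem_span_singleton_self y) ?_
    rw [Submodule.mem_torsionBySet_iff] at hm ⊢
    intro a
    apply hy
    have := hm a
    change y • a • m' = y • 0
    rw [smul_zero, smul_comm]
    exact this
  obtain ⟨q', hq', hle⟩ := exists_le_isAssociatedPrime_of_isNoetherianRing R _ hm0
  refine ⟨q', hq', fun a ha => hle ?_, hle ?_⟩
  · rw [Submodule.mem_colon_singleton, Submodule.mem_bot, ← Submodule.Quotient.mk_smul]
    rw [Submodule.mem_torsionBySet_iff] at hm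
    rw [show a • m = 0 from hm ⟨a, ha⟩, Submodule.Quotient.mk_zero]
  · rw [Submodule.mem_colon_singleton, Submodule.mem_bot, ← Submodule.Quotient.mk_smul,
      Submodule.Quotient.mk_eq_zero]
    exact Submodule.smul_mem_pointwise_smul _ _ _ trivial

lemma mem_of_isAssociatedPrime {R : Type*} [CommRing R] [IsNoetherianRing R] {rs : List R}
    {p : Ideal R} (hp : IsAssociatedPrime p (R ⧸ (Ideal.ofList rs • ⊤ : Submodule R R)))
    {r : R} (hr : r ∈ rs) : r ∈ p := by
  rw [isAssociatedPrime_iff] at hp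
  obtain ⟨-, x, rfl⟩ := hp
  obtain ⟨x, rfl⟩ := Submodule.Quotient.mk_surjective _ x
  rw [Submodule.mem_colon_singleton, Submodule.mem_bot, ← Submodule.Quotient.mk_smul,
    Submodule.Quotient.mk_eq_zero]
  exact Submodule.smul_mem_smul (Ideal.subset_span hr) trivial

lemma isMaximal_of_lt {R : Type*} [CommRing R] {I : Ideal R} (hdim : ringKrullDim (R ⧸ I) ≤ 1)
    {p q : Ideal R} (hp : p.IsPrime) (hq : q.IsPrime) (hI : I ≤ p) (hpq : p < q) :
    q.IsMaximal := by
  rw [ringKrullDim_quotient, Order.krullDim_le_one_iff] at hdim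
  rcases hdim ⟨⟨q, hq⟩, hI.trans hpq.le⟩ with h | h
  · exact absurd (h (b := ⟨⟨p, hp⟩, hI⟩) hpq.le) (not_le_of_gt hpq)
  · obtain ⟨m, hm, hqm⟩ := q.exists_le_maximal hq.ne_top
    have : m ≤ q := h (b := ⟨⟨m, hm.isPrime⟩, (hI.trans hpq.le).trans hqm⟩) hqm
    rwa [le_antisymm hqm this]

/-- If `dim R / I ≤ 1`, then `I` contains weakly regular sequences of every length less than `n`.
When a sequence `rs` of length `r < n - 1` cannot be extended inside `I`, some prime `p ⊇ I` is
associated to `R / (rs)`, and `p` is not maximal. Dividing by one more regular element `y ∉ p`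
makes a prime strictly above `p` associated to `R / (rs, y)`; that prime is maximal as
`dim R / I ≤ 1`, which is impossible for a sequence of length `r + 1 < n`. -/
lemma exists_isWeaklyRegular {k : Type*} [Field k] {n : ℕ} (I : Ideal (MvPolynomial (Fin n) k))
    (hdim : ringKrullDim (MvPolynomial (Fin n) k ⧸ I) ≤ 1) : ∀ r : ℕ, r < n →
    ∃ rs : List (MvPolynomial (Fin n) k), rs.length = r ∧ (∀ s ∈ rs, s ∈ I) ∧
      IsWeaklyRegular (MvPolynomial (Fin n) k) rs
  | 0, _ => ⟨[], rfl, by simp, by simp⟩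
  | r + 1, hr => by
    obtain ⟨rs, hlen, hmem, hreg⟩ := exists_isWeaklyRegular I hdim r (by omega)
    have key : ∀ y, IsSMulRegular (MvPolynomial (Fin n) k ⧸ (Ideal.ofList rs • ⊤ :
        Submodule (MvPolynomial (Fin n) k) (MvPolynomial (Fin n) k))) y →
        IsWeaklyRegular (MvPolynomial (Fin n) k) (rs ++ [y]) := fun y hy => by
      rw [isWeaklyRegular_append_iff, isWeaklyRegular_singleton_iff]
      exact ⟨hreg, hy⟩
    have hnm : ∀ q : Ideal (MvPolynomial (Fin n) k), IsAssociatedPrime q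
        (MvPolynomial (Fin n) k ⧸ (Ideal.ofList rs • ⊤ :
          Submodule (MvPolynomial (Fin n) k) (MvPolynomial (Fin n) k))) → ¬ q.IsMaximal := by
      intro q hq hmax
      exact not_isAssociatedPrime_of_isMaximal q rs hreg (fun s hs => mem_of_isAssociatedPrime hq hs)
        (by omega) hq
    obtain ⟨s, hs, hs'⟩ := exists_isSMulRegular_mem (M := (MvPolynomial (Fin n) k ⧸
        (Ideal.ofList rs • ⊤ : Submodule (MvPolynomial (Fin n) k) (MvPolynomial (Fin n) k)))) I (by
      intro p hp hIp
      obtain ⟨q, hq, hpq⟩ := p.exists_le_maximal hp.isPrime.ne_top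
      obtain ⟨y, hyq, hy⟩ := exists_isSMulRegular_mem (M := (MvPolynomial (Fin n) k ⧸
        (Ideal.ofList rs • ⊤ : Submodule (MvPolynomial (Fin n) k) (MvPolynomial (Fin n) k)))) q (by
          intro p' hp' hqp'
          refine hnm p' hp' ?_
          rwa [← hq.eq_of_le hp'.isPrime.ne_top hqp'])
      obtain ⟨q', hq', hpq', hyq'⟩ :=
        exists_isAssociatedPrime_quotSMulTop hp hy hq.isPrime hpq hyq
      have hyp : y ∉ p := by
        intro hyp
        rw [isAssociatedPrime_iff] at hp
        obtain ⟨hpp, x, hx⟩ := hp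
        rw [hx, Submodule.mem_colon_singleton, Submodule.mem_bot] at hyp
        have : x = 0 := hy (by simpa using hyp)
        apply hpp.ne_top
        rw [hx, this]
        simp
      have hmax : q'.IsMaximal := isMaximal_of_lt hdim hp.isPrime hq'.isPrime hIp
        (lt_of_le_of_ne hpq' fun h => hyp (h ▸ hyq'))
      have hE : (Ideal.ofList (y :: rs) • ⊤ : Submodule (MvPolynomial (Fin n) k)
          (MvPolynomial (Fin n) k)) = Ideal.ofList (rs ++ [y]) • ⊤ := by
        rw [Ideal.ofList_append, Ideal.ofList_cons, Ideal.ofList_singleton, sup_comm]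
      have hass : IsAssociatedPrime q' (MvPolynomial (Fin n) k ⧸
          (Ideal.ofList (rs ++ [y]) • ⊤ : Submodule (MvPolynomial (Fin n) k)
            (MvPolynomial (Fin n) k))) := by
        rw [← (Submodule.quotEquivOfEq _ _ hE).isAssociatedPrime_iff,
          (Submodule.quotOfListConsSMulTopEquivQuotSMulTopOuter _ y rs).isAssociatedPrime_iff]
        exact hq'
      exact not_isAssociatedPrime_of_isMaximal q' (rs ++ [y]) (key y hy)
        (fun s hs => mem_of_isAssociatedPrime hass hs) (by simp; omega) hass)
    refine ⟨rs ++ [s], by simp [hlen], ?_, key s hs'⟩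
    intro t ht
    rw [List.mem_append, List.mem_singleton] at ht
    rcases ht with ht | rfl
    · exact hmem t ht
    · exact hs
end Depth

/-! ### Syzygies and local numbers of generators -/

section Local
open Matrix

/-- If the localization at `p` of an ideal with generators `f_1, …, f_N` has fewer than `N`
generators, some syzygy of `f` has an entry outside `p`. Writing each of the two generating sets
through the other by matrices `A` and `B`, the rows of `1 - A B` are syzygies, and they cannot all
vanish over the residue field since `A B` has rank less than `N`. -/
lemma exists_syzygy_notMem {R : Type*} [CommRing R] [IsDomain R] {N : ℕ} (f : Fin N → R)
    (p : Ideal R) [hp : p.IsPrime] (s : Finset (Localization.AtPrime p))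
    (hs : Ideal.span (s : Set (Localization.AtPrime p)) =
      (Ideal.span (Set.range f)).map (algebraMap R (Localization.AtPrime p)))
    (hcard : s.card < N) : ∃ u : Fin N → R, ∑ l, u l * f l = 0 ∧ ∃ l, u l ∉ p := by
  let S := Localization.AtPrime p
  let F : Fin N → S := fun l => algebraMap R S (f l)
  have hs' : Ideal.span (Set.range ((↑) : s → S)) = Ideal.span (Set.range F) := by
    rw [Ideal.map_span, ← Set.range_comp] at hs
    rw [Subtype.range_coe_subtype]
    exact hs
  have hA : ∀ i, ∃ c : s → S, ∑ j, c j * j.1 = F i := fun i =>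
    Ideal.mem_span_range_iff_exists_fun.1 (hs' ▸ Ideal.subset_span ⟨i, rfl⟩)
  have hB : ∀ j : s, ∃ c : Fin N → S, ∑ i, c i * F i = j.1 := fun j =>
    Ideal.mem_span_range_iff_exists_fun.1 (hs' ▸ Ideal.subset_span ⟨j, rfl⟩)
  choose A hA using hA
  choose B hB using hB
  let C : Matrix (Fin N) (Fin N) S := 1 - (Matrix.of A) * (Matrix.of B)
  have hC : ∀ i, ∑ l, C i l * F l = 0 := by
    have : C *ᵥ F = 0 := by
      have h1 : Matrix.of B *ᵥ F = fun j => j.1 := funext hB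
      have h2 : Matrix.of A *ᵥ (fun j : s => j.1) = F := funext hA
      rw [Matrix.sub_mulVec, ← Matrix.mulVec_mulVec, h1, h2, Matrix.one_mulVec, sub_self]
    exact fun i => congrFun this i
  have hunit : ∃ i l, IsUnit (C i l) := by
    by_contra! h
    let π := IsLocalRing.residue S
    have h0 : π.mapMatrix C = 0 := by
      ext i l
      exact (IsLocalRing.residue_eq_zero_iff _).2 ((IsLocalRing.mem_maximalIdeal _).2 (h i l))
    have h1 : (1 : Matrix (Fin N) (Fin N) (IsLocalRing.ResidueField S)) =
        (Matrix.of A).map π * (Matrix.of B).map π := by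
      rw [map_sub, map_one, sub_eq_zero] at h0
      rw [h0, ← Matrix.map_mul]
      rfl
    have h2 := congrArg Matrix.rank h1
    rw [Matrix.rank_one] at h2
    have h3 := (Matrix.rank_mul_le_left ((Matrix.of A).map π) ((Matrix.of B).map π)).trans
      (Matrix.rank_le_card_width _)
    rw [← h2] at h3
    simp at h3
    omega
  obtain ⟨i, l, hil⟩ := hunit
  obtain ⟨t, ht⟩ := IsLocalization.exist_integer_multiples_of_finite p.primeCompl (C i)
  choose u hu using ht
  refine ⟨u, ?_, l, ?_⟩
  · apply IsLocalization.injective S p.primeCompl_le_nonZeroDivisors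
    rw [map_sum, map_zero]
    simp_rw [map_mul, hu]
    have : ∀ x, ((t : R) • C i x) * algebraMap R S (f x) = (t : R) • (C i x * F x) := by
      intro x
      rw [smul_mul_assoc]
    simp_rw [this, ← Finset.smul_sum, hC, smul_zero]
  · have : IsUnit (algebraMap R S (u l)) := by
      rw [hu, Algebra.smul_def]
      exact (IsLocalization.map_units S t).mul hil
    exact (IsLocalization.AtPrime.isUnit_to_map_iff S p _).1 this
end Local

/-! ### Skew-symmetric matrices as Koszul cycles -/

section Dict
open AlternatingMap

/-- The alternating form `(x, y) ↦ ∑ a i j x_i y_j` attached to a skew-symmetric matrix with zero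
diagonal. It identifies these matrices with the degree-two part of the Koszul complex. -/
def skewForm {R : Type*} [CommRing R] {N : ℕ} (a : Fin N → Fin N → R)
    (hs : ∀ i j, a i j = - a j i) (hd : ∀ i, a i i = 0) : Kos R N R 2 :=
  { ∑ i, ∑ j, a i j • (MultilinearMap.mkPiAlgebra R (Fin 2) R).compLinearMap
      (fun t => (LinearMap.proj (![i, j] t) : (Fin N → R) →ₗ[R] R)) with
    map_eq_zero_of_eq' := by
      intro v s t hst hne
      have h01 : v 0 = v 1 := by
        match s, t, hst, hne with
        | 0, 1, h, _ => exact h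
        | 1, 0, h, _ => exact h.symm
        | 0, 0, _, h => exact absurd rfl h
        | 1, 1, _, h => exact absurd rfl h
      simp only [MultilinearMap.toFun_eq_coe, _root_.sum_apply, _root_.smul_apply,
        MultilinearMap.compLinearMap_apply, MultilinearMap.mkPiAlgebra_apply, Fin.prod_univ_two,
        LinearMap.proj_apply, h01, Matrix.cons_val_zero, Matrix.cons_val_one, smul_eq_mul]
      rw [← Finset.sum_product']
      refine Finset.sum_involution (fun x _ => x.swap) ?_ ?_ ?_ ?_
      · rintro ⟨i, j⟩ -
        simp only [Prod.swap]
        rw [hs i j]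
        ring
      · rintro ⟨i, j⟩ - h0 h
        simp only [Prod.swap, Prod.mk.injEq] at h
        apply h0
        simp [h.1, hd]
      · simp
      · simp }

lemma skewForm_apply {R : Type*} [CommRing R] {N : ℕ} (a : Fin N → Fin N → R)
    (hs : ∀ i j, a i j = - a j i) (hd : ∀ i, a i i = 0) (v : Fin 2 → Fin N → R) :
    skewForm a hs hd v = ∑ i, ∑ j, a i j * (v 0 i * v 1 j) := by
  change (∑ i, ∑ j, a i j • (MultilinearMap.mkPiAlgebra R (Fin 2) R).compLinearMap
      (fun t => (LinearMap.proj (![i, j] t) : (Fin N → R) →ₗ[R] R))) v = _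
  simp [Fin.prod_univ_two]

lemma skewForm_curryLeft {R : Type*} [CommRing R] {N : ℕ} (a : Fin N → Fin N → R)
    (hs : ∀ i j, a i j = - a j i) (hd : ∀ i, a i i = 0) (f : Fin N → R)
    (hf : ∀ j, ∑ i, a i j * f i = 0) : (skewForm a hs hd).curryLeft f = 0 := by
  ext v
  rw [curryLeft_apply_apply, skewForm_apply, Finset.sum_comm]
  simp only [Matrix.cons_val_zero, Matrix.cons_val_one, AlternatingMap.zero_apply]
  refine Finset.sum_eq_zero fun j _ => ?_
  simp_rw [← mul_assoc, ← Finset.sum_mul, hf, zero_mul]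

lemma skewForm_curryLeft_single {R : Type*} [CommRing R] {N : ℕ} (a : Fin N → Fin N → R)
    (hs : ∀ i j, a i j = - a j i) (hd : ∀ i, a i i = 0) (l : Fin N) (v : Fin 1 → Fin N → R) :
    (skewForm a hs hd).curryLeft (Pi.single l 1) v = ∑ j, a l j * v 0 j := by
  rw [curryLeft_apply_apply, skewForm_apply]
  simp only [Matrix.cons_val_zero, Matrix.cons_val_one]
  rw [Finset.sum_eq_single l]
  · simp
  · intro i _ hi
    simp [hi]
  · simp

/-- An element of `B₁`, viewed as a linear form, is the Koszul boundary of a two-form. -/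
lemma exists_of_mem_koszulB1 {k : Type*} [Field k] {n : ℕ}
    (f : Fin (n+1) → MvPolynomial (Fin n) k) {v : Fin (n+1) → MvPolynomial (Fin n) k}
    (hv : v ∈ koszulB1 f) : ∃ w : Kos (MvPolynomial (Fin n) k) (n+1) (MvPolynomial (Fin n) k) 2,
      ∀ x : Fin 1 → Fin (n+1) → MvPolynomial (Fin n) k, w.curryLeft f x = ∑ i, v i * x 0 i := by
  induction hv using Submodule.span_induction with
  | mem v hv =>
    obtain ⟨i, j, -, rfl⟩ := hv
    let R := MvPolynomial (Fin n) k
    refine ⟨wedge (LinearMap.proj i : (Fin (n+1) → R) →ₗ[R] R)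
      ((AlternatingMap.ofSubsingleton R (Fin (n+1) → R) R (0 : Fin 1)
        (LinearMap.proj j)) : Kos R (n+1) R (0+1)), fun x => ?_⟩
    rw [curryLeft_wedge]
    simp [wedge, alternatizeUncurryFin_apply, sub_mul, Finset.sum_sub_distrib, Pi.single_apply]
    ring
  | zero => exact ⟨0, fun x => by simp [curryLeft_zero]⟩
  | add v v' _ _ h h' =>
    obtain ⟨w, hw⟩ := h
    obtain ⟨w', hw'⟩ := h'
    exact ⟨w + w', fun x => by
      simp [curryLeft_add, hw, hw', add_mul, Finset.sum_add_distrib]⟩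
  | smul r v _ h =>
    obtain ⟨w, hw⟩ := h
    exact ⟨r • w, fun x => by simp [curryLeft_smul, hw, Finset.mul_sum, mul_assoc]⟩

lemma inKoszulB2_of_boundary {k : Type*} [Field k] {n : ℕ}
    (f : Fin (n+1) → MvPolynomial (Fin n) k)
    (a : Fin (n+1) → Fin (n+1) → MvPolynomial (Fin n) k)
    (hs : ∀ i j, a i j = - a j i) (hd : ∀ i, a i i = 0)
    (b : Kos (MvPolynomial (Fin n) k) (n+1) (MvPolynomial (Fin n) k) 3)
    (hb : b.curryLeft f = skewForm a hs hd) : InKoszulB2 f a := by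
  let R := MvPolynomial (Fin n) k
  let e : Fin (n+1) → Fin (n+1) → R := fun i => Pi.single i 1
  have hf : f = ∑ l, f l • e l := by
    ext i : 1
    simp [e, Pi.single_apply]
  have hval : ∀ i j l, b ![e i, e j, e l] = -b ![e j, e i, e l] ∧
      b ![e i, e j, e l] = -b ![e i, e l, e j] := by
    intro i j l
    constructor
    · exact DFunLike.congr_fun (curryLeft_curryLeft_swap b (e i) (e j)) ![e l]
    · exact DFunLike.congr_fun (curryLeft_curryLeft_swap (b.curryLeft (e i)) (e j) (e l)) ![]
  refine ⟨fun i j l => b ![e i, e j, e l], fun i j l => (hval i j l).1, fun i j l => (hval i j l).2,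
    ?_, ?_⟩
  · rintro i j l (rfl | rfl | rfl)
    · exact b.map_eq_zero_of_eq _ (i := 0) (j := 1) rfl (by decide)
    · exact b.map_eq_zero_of_eq _ (i := 1) (j := 2) rfl (by decide)
    · exact b.map_eq_zero_of_eq _ (i := 0) (j := 2) rfl (by decide)
  · intro i j
    have h1 : skewForm a hs hd ![e i, e j] = a i j := by
      have := skewForm_curryLeft_single a hs hd i ![e j]
      rw [curryLeft_apply_apply] at this
      refine this.trans ?_
      simp [e, Pi.single_apply]
    rw [← h1, ← hb]
    conv_lhs => rw [hf]
    let ev : Kos R (n+1) R 2 →ₗ[R] R :=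
      { toFun := fun c => c ![e i, e j], map_add' := fun _ _ => rfl, map_smul' := fun _ _ => rfl }
    change (ev ∘ₗ b.curryLeft) (∑ l, f l • e l) = _
    rw [map_sum]
    refine Finset.sum_congr rfl fun l _ => ?_
    rw [map_smul, smul_eq_mul, mul_comm]
    rfl
end Dict

/-! ### The initial degrees of the first two homology modules -/

/-- If `dim(R/I) ≤ 1` and `I` is locally generated by at most `height(p) + 1` elements at
every prime `p ⊇ I`, then `indeg(H₂) ≥ indeg(H₁) + d`: for every `ν` with `(H₂)_ν ≠ 0`
there is `ν' ≤ ν - d` with `(H₁)_{ν'} ≠ 0`. -/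
theorem indeg_H2_ge_indeg_H1_add_d
    (k : Type*) [Field k] (n d : ℕ) (hn : 2 ≤ n) (hd : 1 ≤ d)
    (f : Fin (n+1) → MvPolynomial (Fin n) k)
    (hfh : ∀ i, (f i).IsHomogeneous d)
    (hfl : LinearIndependent k f)
    (I : Ideal (MvPolynomial (Fin n) k)) (hI : I = Ideal.span (Set.range f))
    (hdim : ringKrullDim (MvPolynomial (Fin n) k ⧸ I) ≤ 1)
    (hloc : ∀ (p : Ideal (MvPolynomial (Fin n) k)) (hp : p.IsPrime), I ≤ p →
      ∃ s : Finset (Localization.AtPrime p),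
        Ideal.span (s : Set (Localization.AtPrime p)) =
          I.map (algebraMap (MvPolynomial (Fin n) k) (Localization.AtPrime p)) ∧
        (s.card : ℕ∞) ≤
          Order.height (⟨p, hp⟩ : PrimeSpectrum (MvPolynomial (Fin n) k)) + 1) :
    ∀ ν : ℕ, H2Nonzero f d ν → ∃ ν' : ℕ, ν' + d ≤ ν ∧ H1Nonzero f d ν' := by
  rintro ν ⟨a, e, rfl, hah, hs, hdiag, haf, hnB⟩
  refine ⟨e + d, by omega, ?_⟩
  by_contra hH
  have hrow : ∀ l, (fun j => a l j) ∈ koszulB1 f := by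
    intro l
    by_contra hl
    refine hH ⟨fun j => a l j, e, rfl, hah l, ?_, hl⟩
    rw [← neg_eq_zero, ← Finset.sum_neg_distrib, ← haf l]
    exact Finset.sum_congr rfl fun j _ => by
      change -(a l j * f j) = a j l * f j
      rw [hs l j, neg_mul, neg_neg]
  subst hI
  let R := MvPolynomial (Fin n) k
  let z : Kos R (n+1) R 2 := skewForm a hs hdiag
  have hz : z.curryLeft f = 0 := skewForm_curryLeft a hs hdiag f haf
  obtain ⟨rs, hlen, hmem, hreg⟩ :=
    exists_isWeaklyRegular (Ideal.span (Set.range f)) hdim (n - 1) (by omega)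
  have hmem' : ∀ r ∈ rs, ∃ c : (Fin (n+1) → R) →ₗ[R] R, c f = r :=
    fun r hr => exists_linear_of_mem_span f (hmem r hr)
  let D : Kos R (n+1) R 3 →ₗ[R] Kos R (n+1) R 2 :=
    { toFun := fun b => b.curryLeft f, map_add' := fun _ _ => rfl, map_smul' := fun _ _ => rfl }
  -- The annihilator of the class of `z` in the second Koszul homology.
  let J : Ideal R := (LinearMap.range D).comap (LinearMap.toSpanSingleton R _ z)
  have hJ : ∀ s, s ∈ J ↔ ∃ b : Kos R (n+1) R 3, b.curryLeft f = s • z := fun s => Iff.rfl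
  obtain ⟨s, hsJ, hsreg⟩ := exists_isSMulRegular_mem
    (M := R ⧸ (Ideal.ofList rs • ⊤ : Submodule R R)) J (by
      intro p hp hJp
      have hpp : p.IsPrime := hp.isPrime
      by_cases hIp : Ideal.span (Set.range f) ≤ p
      -- The prime `p` has height less than `n`, so `I` is generated locally at `p` by at most `n`
      -- elements, which yields a syzygy with a coefficient outside `p`.
      · have hnmax : ¬ p.IsMaximal := fun hmax =>
          not_isAssociatedPrime_of_isMaximal p rs hreg
            (fun r hr => mem_of_isAssociatedPrime hp hr) (by omega) hp
        obtain ⟨S, hS, hcard⟩ := hloc p hpp hIp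
        have hht : Order.height (⟨p, hpp⟩ : PrimeSpectrum R) + 1 ≤ n := by
          obtain ⟨q, hq, hpq⟩ := p.exists_le_maximal hpp.ne_top
          have hlt : (⟨p, hpp⟩ : PrimeSpectrum R) < ⟨q, hq.isPrime⟩ :=
            lt_of_le_of_ne hpq fun h => hnmax (by
              have : p = q := congrArg PrimeSpectrum.asIdeal h
              rwa [this])
          have h1 := Order.height_add_one_le hlt
          have h2 := Order.height_le_krullDim (⟨q, hq.isPrime⟩ : PrimeSpectrum R)
          have h3 : Order.krullDim (PrimeSpectrum R) = n := by
            have := MvPolynomial.ringKrullDim_of_isNoetherianRing (R := k) (ι := Fin n)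
            rw [ringKrullDim_eq_zero_of_field, zero_add, Nat.card_eq_fintype_card,
              Fintype.card_fin] at this
            exact this
          rw [h3] at h2
          exact h1.trans (by exact_mod_cast h2)
        have hcard' : S.card < n + 1 := by
          have := hcard.trans hht
          have : S.card ≤ n := by exact_mod_cast this
          omega
        obtain ⟨u, hu, l, hul⟩ := exists_syzygy_notMem f p S hS hcard'
        apply hul
        apply hJp
        rw [hJ]
        obtain ⟨w, hw⟩ := exists_of_mem_koszulB1 f (hrow l)
        refine smul_mem_boundaries_of_rows f u hu l
          (fun a ha => koszul_exact f rs hmem' hreg 2 (by omega) a ha) z hz w ?_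
        ext v
        rw [hw, skewForm_curryLeft_single]
      · apply hIp
        refine le_trans (fun r hr => ?_) hJp
        obtain ⟨c, rfl⟩ := exists_linear_of_mem_span f hr
        exact ⟨wedge c z, smul_mem_boundaries f c z hz⟩)
  obtain ⟨b', hb'⟩ := hsJ
  obtain ⟨b, hb⟩ := koszul_torsion_free f s rs hmem' (M := R) (by
    rw [RingTheory.Sequence.isWeaklyRegular_append_iff, RingTheory.Sequence.isWeaklyRegular_singleton_iff]
    exact ⟨hreg, hsreg⟩) 1 (by omega) z hz b' hb'
  exact hnB (inKoszulB2_of_boundary f a hs hdiag b hb)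

end
end

section
/- Assume char k = 0. Then end(R/I) ≥ ⌊(n+1)(d−1)/2⌋; explicitly, there exists an integer μ ≥ ⌊(n+1)(d−1)/2⌋ such that I_μ ≠ R_μ, i.e., some homogeneous polynomial of degree μ does not belong to I. -/
/-!
Write `R = k[X_0, …, X_{n-1}]` and `μ = ⌊(n + 1)(d - 1) / 2⌋`. In fact `I_μ ≠ R_μ`, by a dimension
count.

For an ideal `J` generated by forms `g_0, …, g_{r-1}` of degree `d` and one more form `g_r`,
multiplication by `g_r` maps `J` to `J`, so that
`dim (J + (g_r))_j ≤ dim J_j + codim J_{j-d}` (`finrank_idealPart_succ_add_le`).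
The dimension in a fixed degree of an ideal generated by forms is the rank of a linear map that is
affine linear in the generators, so along a line of generators it takes its maximum outside a finite
set (`finite_setOf_finrank_range_add_smul_lt`). On the line joining the given forms to the powers
`X_i ^ d` one can thus assume, over an infinite field, that `J_{j-d}` is at least as large as
`(X_0 ^ d, …, X_{r-1} ^ d)_{j-d}`, without making `(J + (g_r))_j` smaller
(`finrank_idealPart_succ_le`). By induction on `r ≤ n`, no `r` forms of degree `d` generate more, in
any degree, than `X_0 ^ d, …, X_{r-1} ^ d` (`finrank_idealPart_add_ncard_le`). One further step, from
`n` to `n + 1` generators, gives `codim I_j ≥ c(j) - c(j - d)`, where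
`c(j) = dim (R / (X_0 ^ d, …, X_{n-1} ^ d))_j` is the coefficient of `T ^ j` in
`(1 + T + ⋯ + T ^ (d - 1)) ^ n`.

These coefficients are symmetric about `n (d - 1) / 2` and unimodal, and they satisfy
`c(j - d) < c(j)` for `0 ≤ j ≤ (n + 1)(d - 1) / 2` (`boxCount_lt`), in particular for `j = μ`.
-/

open MvPolynomial

/-! ### Ranks in a pencil of linear maps -/

/-- The rank of `A + t • B` drops below the rank of `A` for only finitely many `t`: on a complement
`K` of `ker A`, a left inverse `P` of `A|_K` turns the family into `1 + t • C` with `C = P ∘ B|_K`,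
which is injective unless `-t⁻¹` is an eigenvalue of `C`. -/
theorem finite_setOf_finrank_range_add_smul_lt {k U W : Type*} [Field k] [AddCommGroup U]
    [Module k U] [FiniteDimensional k U] [AddCommGroup W] [Module k W] (A B : U →ₗ[k] W) :
    {t : k | Module.finrank k (LinearMap.range (A + t • B)) <
      Module.finrank k (LinearMap.range A)}.Finite := by
  obtain ⟨K, hK⟩ := Submodule.exists_isCompl (LinearMap.ker A)
  have hinj : LinearMap.ker (A ∘ₗ K.subtype) = ⊥ := by
    rw [LinearMap.ker_eq_bot']
    intro x hx
    have := hK.disjoint.le_bot (show (x : U) ∈ LinearMap.ker A ⊓ K from ⟨hx, x.2⟩)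
    exact Subtype.ext this
  obtain ⟨P, hP⟩ := LinearMap.exists_leftInverse_of_injective _ hinj
  set C : Module.End k K := P ∘ₗ B ∘ₗ K.subtype with hC
  have hrk : Module.finrank k (LinearMap.range A) = Module.finrank k K := by
    have h1 := LinearMap.finrank_range_add_finrank_ker A
    have h2 := Submodule.finrank_add_eq_of_isCompl hK
    omega
  have hfin : {μ : k | C.HasEigenvalue μ}.Finite := by
    exact Module.End.finite_hasEigenvalue C
  refine ((hfin.preimage (f := fun t : k => -t⁻¹) ?_)).subset ?_
  · intro a _ b _ h
    simpa using h
  intro t ht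
  by_contra hev
  have hinj2 : LinearMap.ker ((A + t • B) ∘ₗ K.subtype) = ⊥ := by
    rw [LinearMap.ker_eq_bot']
    intro x hx
    have hx2 : x + t • C x = 0 := by
      have h1 := congrArg P hx
      have h2 := LinearMap.congr_fun hP x
      simp only [LinearMap.comp_apply, LinearMap.add_apply, LinearMap.smul_apply, map_add,
        map_smul, map_zero, LinearMap.id_apply] at h1 h2
      rw [h2] at h1
      exact h1
    by_contra hx0
    apply hev
    have ht0 : t ≠ 0 := by
      rintro rfl
      simp at hx2
      exact hx0 hx2
    refine Module.End.hasEigenvalue_of_hasEigenvector (x := x) ⟨?_, hx0⟩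
    rw [Module.End.mem_eigenspace_iff]
    have : t • C x = -x := by rw [eq_neg_iff_add_eq_zero, add_comm]; exact hx2
    rw [neg_smul, ← smul_neg, ← this, smul_smul, inv_mul_cancel₀ ht0, one_smul]
  have h3 : Module.finrank k K ≤ Module.finrank k (LinearMap.range (A + t • B)) := by
    rw [← LinearMap.finrank_range_of_inj (LinearMap.ker_eq_bot.1 hinj2)]
    exact Submodule.finrank_mono (LinearMap.range_comp_le_range _ _)
  simp only [Set.mem_ofPred_eq] at ht
  omega

/-! ### Strict unimodality of the coefficients of `(1 + T + ⋯ + T ^ (d - 1)) ^ m` -/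

/-- The number of points of the box `{0, …, d - 1} ^ m` with coordinate sum `j`, that is, the
coefficient of `T ^ j` in `(1 + T + ⋯ + T ^ (d - 1)) ^ m`. The degree `j` is an integer, so that
shifts need no truncated subtraction. -/
def boxCount (d m : ℕ) (j : ℤ) : ℕ :=
  (Finset.univ.filter fun a : Fin m → Fin d => ∑ i, ((a i : ℕ) : ℤ) = j).card

theorem boxCount_succ (d m : ℕ) (j : ℤ) :
    boxCount d (m + 1) j = ∑ i : Fin d, boxCount d m (j - (i : ℕ)) := by
  simp only [boxCount, Finset.card_filter]
  rw [← (Fin.consEquiv fun _ => Fin d).sum_comp, Fintype.sum_prod_type]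
  refine Finset.sum_congr rfl fun i _ => Finset.sum_congr rfl fun a _ => ?_
  simp only [Fin.consEquiv_apply, Fin.sum_univ_succ, Fin.cons_zero, Fin.cons_succ]
  congr 1
  apply propext
  constructor <;> intro h <;> linarith

theorem boxCount_symm (d m : ℕ) (j : ℤ) :
    boxCount d m (m * (d - 1) - j) = boxCount d m j := by
  unfold boxCount
  refine Finset.card_bij' (fun a _ i => Fin.rev (a i)) (fun a _ i => Fin.rev (a i)) ?_ ?_ ?_ ?_
  · intro a ha
    simp only [Finset.mem_filter, Finset.mem_univ, true_and] at ha ⊢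
    have : ∀ i, (((Fin.rev (a i) : Fin d) : ℕ) : ℤ) = (d - 1) - (a i : ℕ) := by
      intro i; have := (a i).2; rw [Fin.val_rev]; omega
    simp only [this, Finset.sum_sub_distrib, ha]
    simp
    ring
  · intro a ha
    simp only [Finset.mem_filter, Finset.mem_univ, true_and] at ha ⊢
    have : ∀ i, (((Fin.rev (a i) : Fin d) : ℕ) : ℤ) = (d - 1) - (a i : ℕ) := by
      intro i; have := (a i).2; rw [Fin.val_rev]; omega
    simp only [this, Finset.sum_sub_distrib, ha]
    simp
    ring
  · intro a _; simp
  · intro a _; simp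

theorem boxCount_neg (d m : ℕ) {j : ℤ} (hj : j < 0) : boxCount d m j = 0 := by
  unfold boxCount
  rw [Finset.card_eq_zero, Finset.filter_eq_empty_iff]
  intro a _ h
  have : 0 ≤ ∑ i, ((a i : ℕ) : ℤ) := Finset.sum_nonneg fun i _ => by positivity
  omega

/-- `c_{m+1}(j) - c_{m+1}(j - 1) = c_m(j) - c_m(j - d)`, written without subtraction. -/
theorem boxCount_succ_add (d m : ℕ) (j : ℤ) :
    boxCount d (m + 1) j + boxCount d m (j - d) = boxCount d (m + 1) (j - 1) + boxCount d m j := by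
  rw [boxCount_succ, boxCount_succ]
  rw [Fin.sum_univ_eq_sum_range (fun i => boxCount d m (j - i)),
    Fin.sum_univ_eq_sum_range (fun i => boxCount d m (j - 1 - i)),
    ← Finset.sum_range_succ (fun i => boxCount d m (j - i)), Finset.sum_range_succ']
  congr 1
  · refine Finset.sum_congr rfl fun i _ => ?_
    congr 1; push_cast; ring
  · simp

theorem boxCount_one_pos (d : ℕ) {j : ℤ} (h0 : 0 ≤ j) (h1 : j < d) : 0 < boxCount d 1 j := by
  unfold boxCount
  rw [Finset.card_pos]
  refine ⟨fun _ => ⟨j.toNat, by omega⟩, ?_⟩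
  simp [h0]

/-- Strict growth over a step of length `d` up to half of `(m + 2) * (d - 1)`. By
`boxCount_succ_add`, the case `m` says that the counts for dimension `m + 2` increase strictly at
unit steps up to their centre; with the symmetry about the centre this gives the case `m + 1`. -/
theorem boxCount_lt (d : ℕ) (hd : 1 ≤ d) (m : ℕ) : ∀ j : ℤ, 0 ≤ j →
    2 * j ≤ (m + 2) * (d - 1) → boxCount d (m + 1) (j - d) < boxCount d (m + 1) j := by
  induction m with
  | zero =>
    intro j h0 h1
    have : j < d := by push_cast at h1; omega
    rw [boxCount_neg _ _ (by omega)]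
    exact boxCount_one_pos d h0 this
  | succ m ih =>
    have hstep : ∀ j : ℤ, 0 ≤ j → 2 * j ≤ (m + 2) * (d - 1) →
        boxCount d (m + 2) (j - 1) < boxCount d (m + 2) j := by
      intro j h0 h1
      have h2 := ih j h0 h1
      have h3 : boxCount d (m + 2) j + _ = boxCount d (m + 2) (j - 1) + _ :=
        boxCount_succ_add d (m + 1) j
      omega
    have hlt : ∀ e : ℕ, ∀ j : ℤ, 0 ≤ j → 2 * j ≤ (m + 2) * (d - 1) →
        boxCount d (m + 2) (j - (e + 1)) < boxCount d (m + 2) j := by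
      intro e
      induction e with
      | zero => intro j h0 h1; simpa using hstep j h0 h1
      | succ e ihe =>
        intro j h0 h1
        rcases lt_or_ge (j - 1) 0 with h | h
        · rw [boxCount_neg _ _ (by push_cast; omega)]
          exact (Nat.zero_le _).trans_lt (hstep j h0 h1)
        · have h2 := ihe (j - 1) h (by linarith)
          have h3 := hstep j h0 h1
          have : j - 1 - ((e : ℤ) + 1) = j - (((e + 1 : ℕ) : ℤ) + 1) := by push_cast; ring
          rw [this] at h2
          exact h2.trans h3
    have hlt' : ∀ i j : ℤ, i < j → 0 ≤ j → 2 * j ≤ (m + 2) * (d - 1) →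
        boxCount d (m + 2) i < boxCount d (m + 2) j := by
      intro i j hij h0 h1
      have := hlt (j - i - 1).toNat j h0 h1
      rwa [show j - (((j - i - 1).toNat : ℤ) + 1) = i by omega] at this
    intro j h0 h1
    have hd' : (1 : ℤ) ≤ d := by exact_mod_cast hd
    push_cast at h1
    rcases le_or_gt (2 * j) ((m + 2) * (d - 1)) with h | h
    · exact hlt' _ _ (by omega) h0 h
    -- Past the centre, `j` is reflected; the mirror image still lies strictly above `j - d`.
    · rw [← boxCount_symm d (m + 1 + 1) j]
      push_cast
      have hm : 0 ≤ (m : ℤ) * (d - 1) := by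
        apply mul_nonneg <;> omega
      refine hlt' _ _ ?_ ?_ ?_ <;> nlinarith

/-! ### Graded pieces of the polynomial ring and of ideals generated by forms of degree `d` -/

section
variable {k : Type*} [Field k] {n : ℕ}

/-- The forms of degree `j`, for an integer `j`; this is zero when `j < 0`. -/
noncomputable def gradedPart (k : Type*) [Field k] (n : ℕ) (j : ℤ) :
    Submodule k (MvPolynomial (Fin n) k) :=
  restrictSupport k {a | (a.degree : ℤ) = j}

/-- Exponents of the monomials of degree `j` outside the ideal `(X_0 ^ d, …, X_{r-1} ^ d)`. -/
def smallExp (n d r : ℕ) (j : ℤ) : Set (Fin n →₀ ℕ) :=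
  {a | (a.degree : ℤ) = j ∧ ∀ i : Fin n, (i : ℕ) < r → a i < d}

theorem finite_smallExp (n d r : ℕ) (j : ℤ) : (smallExp n d r j).Finite := by
  refine (Finsupp.finite_of_degree_eq (σ := Fin n) j.toNat).subset ?_
  intro a ha
  have := ha.1
  simp only [Set.mem_ofPred_eq]
  omega

theorem smallExp_zero (n d : ℕ) (j : ℤ) : smallExp n d 0 j = {a | (a.degree : ℤ) = j} := by
  simp [smallExp]

theorem gradedPart_eq (d : ℕ) (j : ℤ) :
    gradedPart k n j = restrictSupport k (smallExp n d 0 j) := by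
  rw [smallExp_zero, gradedPart]

theorem finrank_restrictSupport (s : Set (Fin n →₀ ℕ)) :
    Module.finrank k (restrictSupport k s) = s.ncard := by
  rw [Module.finrank_eq_nat_card_basis (basisRestrictSupport k s), Nat.card_coe_set_eq]

instance (j : ℤ) : FiniteDimensional k (gradedPart k n j) := by
  rw [gradedPart_eq 0]
  have := (finite_smallExp n 0 0 j).to_subtype
  exact Module.Finite.of_basis (basisRestrictSupport k _)

theorem finrank_gradedPart (d : ℕ) (j : ℤ) :
    Module.finrank k (gradedPart k n j) = (smallExp n d 0 j).ncard := by
  rw [gradedPart_eq d, finrank_restrictSupport]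

theorem mem_gradedPart_iff {j : ℕ} {p : MvPolynomial (Fin n) k} :
    p ∈ gradedPart k n j ↔ p.IsHomogeneous j := by
  rw [gradedPart, mem_restrictSupport_iff, ← mem_homogeneousSubmodule,
    homogeneousSubmodule_eq_finsupp_supported]
  simp only [Nat.cast_inj]
  rfl

theorem mul_mem_gradedPart {i j : ℤ} {p q : MvPolynomial (Fin n) k} (hp : p ∈ gradedPart k n i)
    (hq : q ∈ gradedPart k n j) : p * q ∈ gradedPart k n (i + j) := by
  have h := Submodule.mul_mem_mul hp hq
  rw [gradedPart, gradedPart, ← restrictSupport_add] at h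
  refine restrictSupport_mono k ?_ h
  rintro _ ⟨a, ha, b, hb, rfl⟩
  simp only [Set.mem_ofPred_eq] at ha hb ⊢
  simp [ha, hb]

/-- The map `(q_i) ↦ ∑ i < r, g_i * q_i` on `r`-tuples of forms of degree `j - d`. -/
noncomputable def idealMap (d r : ℕ) (g : ℕ → MvPolynomial (Fin n) k) (j : ℤ) :
    (Fin r → gradedPart k n (j - d)) →ₗ[k] MvPolynomial (Fin n) k :=
  ∑ i : Fin r, LinearMap.mulLeft k (g i) ∘ₗ (gradedPart k n (j - d)).subtype ∘ₗ LinearMap.proj i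

/-- The degree `j` part of the ideal generated by the forms `g 0, …, g (r - 1)` of degree `d`. The
generators form a sequence, of which only the first `r` terms matter, so that dropping the last
generator does not change `g`. -/
noncomputable def idealPart (d r : ℕ) (g : ℕ → MvPolynomial (Fin n) k) (j : ℤ) :
    Submodule k (MvPolynomial (Fin n) k) := LinearMap.range (idealMap d r g j)

instance (d r : ℕ) (g : ℕ → MvPolynomial (Fin n) k) (j : ℤ) :
    FiniteDimensional k (idealPart d r g j) := by unfold idealPart; infer_instance

theorem idealMap_apply (d r : ℕ) (g : ℕ → MvPolynomial (Fin n) k) (j : ℤ) (q) :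
    idealMap d r g j q = ∑ i : Fin r, g i * (q i : MvPolynomial (Fin n) k) := by
  simp [idealMap]

theorem mul_mem_idealPart {d r : ℕ} (g : ℕ → MvPolynomial (Fin n) k) {j : ℤ} {i : ℕ} (hi : i < r)
    {q : MvPolynomial (Fin n) k} (hq : q ∈ gradedPart k n (j - d)) :
    g i * q ∈ idealPart d r g j := by
  refine ⟨Pi.single ⟨i, hi⟩ ⟨q, hq⟩, ?_⟩
  rw [idealMap_apply, Finset.sum_eq_single ⟨i, hi⟩]
  · simp
  · intro b _ hb; simp [hb]
  · simp

theorem idealPart_le_iff {d r : ℕ} {g : ℕ → MvPolynomial (Fin n) k} {j : ℤ}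
    {N : Submodule k (MvPolynomial (Fin n) k)} :
    idealPart d r g j ≤ N ↔ ∀ i < r, ∀ q ∈ gradedPart k n (j - d), g i * q ∈ N := by
  constructor
  · intro h i hi q hq
    exact h (mul_mem_idealPart g hi hq)
  · rintro h _ ⟨q, rfl⟩
    rw [idealMap_apply]
    exact N.sum_mem fun i _ => h i i.2 _ (q i).2

theorem idealPart_le_gradedPart {d r : ℕ} {g : ℕ → MvPolynomial (Fin n) k}
    (hg : ∀ i, g i ∈ gradedPart k n d) (j : ℤ) : idealPart d r g j ≤ gradedPart k n j := by
  rw [idealPart_le_iff]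
  intro i _ q hq
  have := mul_mem_gradedPart (hg i) hq
  rwa [add_sub_cancel] at this

/-- Adjoining `g r` to the ideal `J` of the first `r` generators raises the dimension in degree `j`
by at most the codimension of `J` in degree `j - d`, because multiplication by `g r` maps `J` into
`J`. -/
theorem finrank_idealPart_succ_add_le {d r : ℕ} {g : ℕ → MvPolynomial (Fin n) k}
    (hg : ∀ i, g i ∈ gradedPart k n d) (j : ℤ) :
    Module.finrank k (idealPart d (r + 1) g j) + Module.finrank k (idealPart d r g (j - d)) ≤
      Module.finrank k (idealPart d r g j) + Module.finrank k (gradedPart k n (j - d)) := by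
  obtain ⟨C, hdis, hsup⟩ :=
    IsModularLattice.exists_disjoint_and_sup_eq (idealPart_le_gradedPart (r := r) hg (j - d))
  have hCle : C ≤ gradedPart k n (j - d) := hsup ▸ le_sup_right
  have : FiniteDimensional k C := Submodule.finiteDimensional_of_le hCle
  have hle : idealPart d (r + 1) g j ≤ idealPart d r g j ⊔ C.map (LinearMap.mulLeft k (g r)) := by
    rw [idealPart_le_iff]
    intro i hi q hq
    rcases Nat.lt_succ_iff_lt_or_eq.1 hi with h | rfl
    · exact Submodule.mem_sup_left (mul_mem_idealPart g h hq)
    · rw [← hsup] at hq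
      obtain ⟨y, hy, z, hz, rfl⟩ := Submodule.mem_sup.1 hq
      rw [mul_add]
      refine Submodule.add_mem_sup ?_ (Submodule.mem_map_of_mem (f := LinearMap.mulLeft k (g i)) hz)
      have key : idealPart d i g (j - d) ≤
          (idealPart d i g j).comap (LinearMap.mulLeft k (g i)) := by
        rw [idealPart_le_iff]
        intro l hl q hq
        rw [Submodule.mem_comap, LinearMap.mulLeft_apply, mul_left_comm]
        refine mul_mem_idealPart g hl ?_
        have := mul_mem_gradedPart (hg i) hq
        rwa [add_sub_cancel] at this
      exact key hy
  have h1 := Submodule.finrank_mono hle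
  have h2 := Submodule.finrank_add_le_finrank_add_finrank (idealPart d r g j)
    (C.map (LinearMap.mulLeft k (g r)))
  have h3 := Submodule.finrank_map_le (LinearMap.mulLeft k (g r)) C
  have h4 := Submodule.finrank_sup_add_finrank_inf_eq (idealPart d r g (j - d)) C
  rw [hsup, hdis.eq_bot, finrank_bot] at h4
  omega

/-- The sequence `X_0 ^ d, …, X_{n-1} ^ d, 0, 0, …`. -/
noncomputable def powVar (k : Type*) [Field k] (n d : ℕ) (i : ℕ) : MvPolynomial (Fin n) k :=
  if h : i < n then X ⟨i, h⟩ ^ d else 0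

theorem powVar_mem (d i : ℕ) : powVar k n d i ∈ gradedPart k n d := by
  unfold powVar
  split_ifs
  · exact mem_gradedPart_iff.2 (isHomogeneous_X_pow _ _)
  · exact zero_mem _

/-- In degree `j`, the codimension of `(X_0 ^ d, …, X_{r-1} ^ d)` is at most the number of monomials
outside it. -/
theorem finrank_gradedPart_le (d r : ℕ) (j : ℤ) :
    Module.finrank k (gradedPart k n j) ≤
      Module.finrank k (idealPart d r (powVar k n d) j) + (smallExp n d r j).ncard := by
  have hle : gradedPart k n j ≤
      idealPart d r (powVar k n d) j ⊔ restrictSupport k (smallExp n d r j) := by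
    rw [gradedPart, restrictSupport_eq_span, Submodule.span_le]
    rintro _ ⟨a, ha, rfl⟩
    by_cases hs : a ∈ smallExp n d r j
    · exact Submodule.mem_sup_right ((monomial_mem_restrictSupport k).2 (Or.inl hs))
    · refine Submodule.mem_sup_left ?_
      simp only [smallExp, Set.mem_ofPred_eq, not_and, not_forall, not_lt] at hs ha
      obtain ⟨i, hi, hai⟩ := hs ha
      have hle : Finsupp.single i d ≤ a := by
        rwa [Finsupp.single_le_iff]
      have hdec : monomial a (1 : k) = powVar k n d i * monomial (a - Finsupp.single i d) 1 := by
        rw [powVar, dif_pos i.2, X_pow_eq_monomial, monomial_mul, one_mul, add_tsub_cancel_of_le hle]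
      beta_reduce
      rw [hdec]
      refine mul_mem_idealPart _ hi ((monomial_mem_restrictSupport k).2 (Or.inl ?_))
      have := congrArg Finsupp.degree (add_tsub_cancel_of_le hle)
      rw [map_add, Finsupp.degree_single] at this
      simp only [Set.mem_ofPred_eq]
      omega
  have := (finite_smallExp n d r j).to_subtype
  have : FiniteDimensional k (restrictSupport k (smallExp n d r j)) :=
    Module.Finite.of_basis (basisRestrictSupport k _)
  have h1 := Submodule.finrank_mono hle
  have h2 := Submodule.finrank_add_le_finrank_add_finrank (idealPart d r (powVar k n d) j)
    (restrictSupport k (smallExp n d r j))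
  rw [finrank_restrictSupport] at h2
  omega

/-! ### Deformation to the powers of the variables -/

theorem idealMap_add_smul (d r : ℕ) (g h : ℕ → MvPolynomial (Fin n) k) (t : k) (j : ℤ) :
    idealMap d r (g + t • h) j = idealMap d r g j + t • idealMap d r h j := by
  refine LinearMap.ext fun q => ?_
  simp only [LinearMap.add_apply, LinearMap.smul_apply, idealMap_apply, Finset.smul_sum,
    ← Finset.sum_add_distrib, Pi.add_apply, Pi.smul_apply, add_mul, smul_mul_assoc]

theorem finite_idealPart_lt (d r : ℕ) (g h : ℕ → MvPolynomial (Fin n) k) (j : ℤ) :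
    {t : k | Module.finrank k (idealPart d r (g + t • h) j) <
      Module.finrank k (idealPart d r g j)}.Finite := by
  refine (finite_setOf_finrank_range_add_smul_lt (idealMap d r g j) (idealMap d r h j)).subset ?_
  intro t ht
  rwa [Set.mem_ofPred_eq, idealPart, idealMap_add_smul] at ht

/-- Put `P = (X_0 ^ d, …, X_{r-1} ^ d)`. If no `r` forms of degree `d` generate more than `P` in any
degree, then `r + 1` such forms exceed the dimension of `P` in degree `j` by at most the codimension
of `P` in degree `j - d`. Both codimensions of `P` enter as numbers of monomials outside `P`. -/
theorem finrank_idealPart_succ_le [Infinite k] {d r : ℕ}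
    (ih : ∀ g : ℕ → MvPolynomial (Fin n) k, (∀ i, g i ∈ gradedPart k n d) → ∀ j : ℤ,
      Module.finrank k (idealPart d r g j) + (smallExp n d r j).ncard ≤
        Module.finrank k (gradedPart k n j))
    {g : ℕ → MvPolynomial (Fin n) k} (hg : ∀ i, g i ∈ gradedPart k n d) (j : ℤ) :
    Module.finrank k (idealPart d (r + 1) g j) + (smallExp n d r j).ncard ≤
      Module.finrank k (gradedPart k n j) + (smallExp n d r (j - d)).ncard := by
  set x := powVar k n d with hx
  -- On the line through `g` and `x`, a general member generates at least as much as `g` in degree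
  -- `j` and at least as much as `x` in degree `j - d`. The line is based at `g` in `f1`, at `x`
  -- in `f2`.
  have f1 := finite_idealPart_lt d (r + 1) g (x - g) j
  have f2 := (finite_idealPart_lt d r x (g - x) (j - d)).preimage (f := fun t : k => 1 - t)
    (fun a _ b _ h => by simpa using h)
  obtain ⟨t, ht⟩ := (f1.union f2).exists_notMem
  simp only [Set.mem_union, Set.mem_preimage, Set.mem_ofPred_eq, not_or, not_lt] at ht
  obtain ⟨ht1, ht2⟩ := ht
  have heq : x + (1 - t) • (g - x) = g + t • (x - g) := by module
  rw [heq] at ht2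
  have hg' : ∀ i, (g + t • (x - g)) i ∈ gradedPart k n d := fun i =>
    add_mem (hg i) (Submodule.smul_mem _ _ (sub_mem (powVar_mem d i) (hg i)))
  have h1 := finrank_idealPart_succ_add_le (r := r) hg' j
  have h2 := ih _ hg' j
  have h3 := finrank_gradedPart_le (k := k) (n := n) d r (j - d)
  rw [← hx] at h3
  omega

/-- The exponents allowed at stage `r` and not at stage `r + 1` are those with `r`-th entry at least
`d`, hence the translates by `d` of the allowed exponents of degree `j - d`. -/
theorem ncard_smallExp_succ {d r : ℕ} (hr : r < n) (j : ℤ) :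
    (smallExp n d r j).ncard = (smallExp n d (r + 1) j).ncard + (smallExp n d r (j - d)).ncard := by
  set e : Fin n →₀ ℕ := Finsupp.single ⟨r, hr⟩ d with he
  have hinj : Function.Injective (fun a : Fin n →₀ ℕ => a + e) := add_left_injective e
  rw [← Set.ncard_image_of_injective (smallExp n d r (j - d)) hinj, ← Set.ncard_union_eq _
    (finite_smallExp n d (r + 1) j) ((finite_smallExp n d r (j - d)).image _)]
  · congr 1
    ext a
    simp only [smallExp, Set.mem_union, Set.mem_ofPred_eq, Set.mem_image]
    constructor
    · rintro ⟨h1, h2⟩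
      by_cases h : a ⟨r, hr⟩ < d
      · refine Or.inl ⟨h1, fun i hi => ?_⟩
        rcases Nat.lt_succ_iff_lt_or_eq.1 hi with h' | h'
        · exact h2 i h'
        · rwa [show i = ⟨r, hr⟩ from Fin.ext h']
      · have hle : e ≤ a := by rw [he, Finsupp.single_le_iff]; omega
        have hsum := tsub_add_cancel_of_le hle
        refine Or.inr ⟨a - e, ⟨?_, fun i hi => ?_⟩, hsum⟩
        · have := congrArg Finsupp.degree hsum
          rw [map_add, he, Finsupp.degree_single, ← he] at this
          omega
        · exact lt_of_le_of_lt (by simp) (h2 i hi)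
    · rintro (⟨h1, h2⟩ | ⟨a, ⟨h1, h2⟩, rfl⟩)
      · exact ⟨h1, fun i hi => h2 i (by omega)⟩
      · refine ⟨?_, fun i hi => ?_⟩
        · rw [map_add, he, Finsupp.degree_single]; push_cast; omega
        · have : (⟨r, hr⟩ : Fin n) ≠ i := by rintro rfl; simp at hi
          simpa [he, Finsupp.single_apply, this] using h2 i hi
  · rw [Set.disjoint_left]
    rintro _ ⟨_, h⟩ ⟨a, _, rfl⟩
    have := h ⟨r, hr⟩ (by simp)
    simp [he] at this

/-- Among all `r ≤ n` forms of degree `d`, the powers `X_0 ^ d, …, X_{r-1} ^ d` generate an ideal of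
the largest possible dimension in every degree. -/
theorem finrank_idealPart_add_ncard_le [Infinite k] (d r : ℕ) (hr : r ≤ n) :
    ∀ g : ℕ → MvPolynomial (Fin n) k, (∀ i, g i ∈ gradedPart k n d) → ∀ j : ℤ,
      Module.finrank k (idealPart d r g j) + (smallExp n d r j).ncard ≤
        Module.finrank k (gradedPart k n j) := by
  induction r with
  | zero =>
    intro g _ j
    have : idealPart d 0 g j = ⊥ := by
      rw [eq_bot_iff, idealPart_le_iff]; intro i hi; omega
    rw [this, finrank_bot, zero_add, finrank_gradedPart d]
  | succ r ih =>
    intro g hg j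
    have h1 := finrank_idealPart_succ_le (ih (by omega)) hg j
    have h2 := ncard_smallExp_succ (d := d) (show r < n by omega) j
    omega

theorem ncard_smallExp_eq_boxCount (d : ℕ) (j : ℤ) :
    (smallExp n d n j).ncard = boxCount d n j := by
  rw [boxCount, ← Set.ncard_coe_finset]
  symm
  refine Set.ncard_congr (fun a _ => Finsupp.equivFunOnFinite.symm fun i => (a i : ℕ)) ?_ ?_ ?_
  · intro a ha
    simp only [Finset.coe_filter, Finset.mem_univ, true_and, Set.mem_ofPred_eq] at ha
    refine ⟨?_, fun i _ => ?_⟩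
    · rw [Finsupp.degree_eq_sum]
      simpa using ha
    · simp
  · intro a b _ _ h
    have h := Finsupp.equivFunOnFinite.symm.injective h
    funext i
    exact Fin.ext (congrFun h i)
  · rintro b ⟨h1, h2⟩
    refine ⟨fun i => ⟨b i, h2 i i.2⟩, ?_, ?_⟩
    · rw [Finsupp.degree_eq_sum] at h1
      simpa using h1
    · ext i; simp

theorem homogeneousComponent_mem_idealPart {d r : ℕ} {g : ℕ → MvPolynomial (Fin n) k}
    (hg : ∀ i, (g i).IsHomogeneous d) {p : MvPolynomial (Fin n) k}
    (hp : p ∈ Ideal.span (Set.range fun i : Fin r => g i)) (j : ℕ) :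
    homogeneousComponent j p ∈ idealPart d r g j := by
  obtain ⟨c, rfl⟩ := (Ideal.mem_span_range_iff_exists_fun).1 hp
  rw [map_sum]
  refine Submodule.sum_mem _ fun i _ => ?_
  rw [← sum_homogeneousComponent (c i), Finset.sum_mul, map_sum]
  refine Submodule.sum_mem _ fun m _ => ?_
  have hm := homogeneousComponent_isHomogeneous m (c i)
  rw [homogeneousComponent_of_mem (hm.mul (hg i))]
  split_ifs with h
  · rw [mul_comm]
    refine mul_mem_idealPart g i.2 ?_
    rw [show (j : ℤ) - d = (m : ℕ) by omega]
    exact mem_gradedPart_iff.2 hm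
  · exact zero_mem _

end

/-- If `char k = 0`, then `end(R/I) ≥ ⌊(n+1)(d-1)/2⌋`: there is a degree
`μ ≥ ⌊(n+1)(d-1)/2⌋` and a homogeneous polynomial of degree `μ` not belonging to `I`. -/
theorem end_R_mod_I_ge
    (k : Type*) [Field k] [CharZero k] (n d : ℕ) (hn : 2 ≤ n) (hd : 1 ≤ d)
    (f : Fin (n+1) → MvPolynomial (Fin n) k)
    (hfh : ∀ i, (f i).IsHomogeneous d)
    (hfl : LinearIndependent k f)
    (I : Ideal (MvPolynomial (Fin n) k)) (hI : I = Ideal.span (Set.range f)) :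
    ∃ μ : ℕ, (n + 1) * (d - 1) / 2 ≤ μ ∧
      ∃ p : MvPolynomial (Fin n) k, p.IsHomogeneous μ ∧ p ∉ I := by
  refine ⟨(n + 1) * (d - 1) / 2, le_rfl, ?_⟩
  set μ := (n + 1) * (d - 1) / 2 with hμ
  by_contra! hall
  have : Infinite k := CharZero.infinite k
  set g : ℕ → MvPolynomial (Fin n) k := fun i => if h : i < n + 1 then f ⟨i, h⟩ else 0 with hgdef
  have hgf : (fun i : Fin (n + 1) => g i) = f := by
    funext i; simp only [hgdef, i.2, dite_true, Fin.eta]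
  have hg : ∀ i, (g i).IsHomogeneous d := by
    intro i
    simp only [hgdef]
    split_ifs
    · exact hfh _
    · exact isHomogeneous_zero _ _ _
  have hle : gradedPart k n μ ≤ idealPart d (n + 1) g μ := by
    intro p hp
    have hp := mem_gradedPart_iff.1 hp
    have h1 := hall p hp
    rw [hI, ← hgf] at h1
    simpa only [homogeneousComponent_eq_self hp] using homogeneousComponent_mem_idealPart hg h1 μ
  have h1 := Submodule.finrank_mono hle
  have h2 := finrank_idealPart_succ_le (finrank_idealPart_add_ncard_le d n le_rfl)
    (fun i => mem_gradedPart_iff.2 (hg i)) μ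
  rw [ncard_smallExp_eq_boxCount, ncard_smallExp_eq_boxCount] at h2
  obtain ⟨m, rfl⟩ : ∃ m, n = m + 1 := ⟨n - 1, by omega⟩
  have h3 := boxCount_lt d hd m μ (by positivity) (by
    have : 2 * μ ≤ (m + 1 + 1) * (d - 1) := by rw [hμ]; omega
    have h := (Int.ofNat_le.2 this)
    push_cast [Nat.cast_sub hd] at h
    linarith)
  omega
end

section
/- For every i ≥ 0, the ℚ-vector space dimension of the degree-i homogeneous component of B equals max{0, a_i}. -/
/-!
Since `B` is the quotient of `A = ℚ[x₁, …, x_n] / (x₁^d, …, x_n^d)` by `ℓ^d`, where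
`ℓ = x₁ + ⋯ + x_n`, the claim follows from the strong Lefschetz property of `A`: every
multiplication map `ℓ^k : A_j → A_{j+k}` is injective or surjective. Then `ℓ^d : A_{i-d} → A_i` has
rank `min (dim A_{i-d}) (dim A_i)`, so its cokernel `B_i` has dimension
`max 0 (dim A_i - dim A_{i-d})`, and `dim A_i` is the coefficient of `t^i` in
`(1 + t + ⋯ + t^{d-1})^n` because the monomials with all exponents below `d` are a basis of `A`.

The strong Lefschetz property comes from an `sl₂`-action, realized on the polynomial ring. The
raising operator is multiplication by `ℓ`, and the lowering operator is
`F = ∑ⱼ ((d - 1) ∂ⱼ - xⱼ ∂ⱼ²)`, which preserves the ideal `(x₁^d, …, x_n^d)` (`lower_mem`). With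
`N = n (d - 1)`, Euler's identity gives `F (ℓ q) = ℓ F q + (N - 2m) q` for `q` of degree `m`, whence
`F (ℓ^k p) = ℓ^k F p + k (N - 2j - k + 1) ℓ^{k-1} p` for `p` of degree `j` (`lower_pow_mul`).
If `2j + k ≤ N` and `ℓ^k p = 0` in `A`, this yields `ℓ^{k+1} F p = 0`, so `F p = 0` by induction on
`j`; then `ℓ^{k-1} p = 0`, and `p = 0` by induction on `k` (`mem_of_pow_mul_mem`). Surjectivity when
`2j + k ≥ N` follows from the symmetry `dim A_m = dim A_{N-m}` (`mulQ_surjective`).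
-/

open MvPolynomial

noncomputable section

/-- The ideal `(x₁^d, …, x_n^d, (x₁ + ⋯ + x_n)^d)` of `ℚ[x₁, …, x_n]`. -/
def lefIdeal (n d : ℕ) : Ideal (MvPolynomial (Fin n) ℚ) :=
  Ideal.span ((Set.range fun j : Fin n => (X j : MvPolynomial (Fin n) ℚ) ^ d) ∪
    {(∑ j, X j) ^ d})

/-- The degree-`i` component of `B = ℚ[x₁,…,x_n]/(x₁^d,…,x_n^d,(x₁+⋯+x_n)^d)`,
as a quotient of the space of homogeneous polynomials of degree `i`. -/
abbrev lefComponent (n d i : ℕ) :=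
  (homogeneousSubmodule (Fin n) ℚ i) ⧸
    Submodule.comap (homogeneousSubmodule (Fin n) ℚ i).subtype
      (Submodule.restrictScalars ℚ (lefIdeal n d))

/-! ### The monomial complete intersection -/

/-- The ideal `(x₁^d, …, x_n^d)` of `ℚ[x₁, …, x_n]`. -/
def monIdeal (n d : ℕ) : Ideal (MvPolynomial (Fin n) ℚ) :=
  Ideal.span (Set.range fun j : Fin n => (X j : MvPolynomial (Fin n) ℚ) ^ d)

/-- The linear form `x₁ + ⋯ + x_n`. -/
def ell (n : ℕ) : MvPolynomial (Fin n) ℚ := ∑ j, X j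

lemma ell_homog (n : ℕ) : (ell n).IsHomogeneous 1 :=
  IsHomogeneous.sum _ _ _ fun j _ => isHomogeneous_X ℚ j

lemma ell_pow_homog (n k : ℕ) : (ell n ^ k).IsHomogeneous k := by
  simpa using (ell_homog n).pow k

lemma mem_monIdeal {n d : ℕ} {p : MvPolynomial (Fin n) ℚ} :
    p ∈ monIdeal n d ↔ ∀ m : Fin n →₀ ℕ, (∀ j, m j < d) → coeff m p = 0 := by
  have h : monIdeal n d = Ideal.span ((fun s => monomial s (1 : ℚ)) ''
      (Set.range fun j : Fin n => Finsupp.single j d)) := by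
    rw [monIdeal, ← Set.range_comp]
    congr 2
    ext1 j
    simp [X_pow_eq_monomial]
  rw [h, mem_ideal_span_monomial_image]
  simp only [Set.mem_range, exists_exists_eq_and, Finsupp.single_le_iff, mem_support_iff]
  refine forall_congr' fun m => ?_
  rw [not_imp_comm]
  simp

lemma homogeneousComponent_mem_monIdeal {n d i : ℕ} {p : MvPolynomial (Fin n) ℚ}
    (hp : p ∈ monIdeal n d) : homogeneousComponent i p ∈ monIdeal n d := by
  rw [mem_monIdeal] at hp ⊢
  intro m hm
  rw [coeff_homogeneousComponent, hp m hm, ite_self]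

/-! ### The lowering operator -/

/-- The `j`-th summand `e ∂ⱼ - xⱼ ∂ⱼ²` of the lowering operator for `d = e + 1`. It sends `xⱼ^k` to
`k (d - k) xⱼ^(k-1)`. -/
def lowerAt {n : ℕ} (e : ℕ) (j : Fin n) (p : MvPolynomial (Fin n) ℚ) : MvPolynomial (Fin n) ℚ :=
  (e : MvPolynomial (Fin n) ℚ) * pderiv j p - X j * pderiv j (pderiv j p)

/-- The lowering operator of the `sl₂`-action for `d = e + 1`. -/
def lower {n : ℕ} (e : ℕ) (p : MvPolynomial (Fin n) ℚ) : MvPolynomial (Fin n) ℚ :=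
  ∑ j, lowerAt e j p

lemma lowerAt_mul_X_pow_mem {n : ℕ} (e : ℕ) (i j : Fin n) (a : MvPolynomial (Fin n) ℚ) :
    lowerAt e i (a * X j ^ (e + 1)) ∈ monIdeal n (e + 1) := by
  have hX : (X j : MvPolynomial (Fin n) ℚ) ^ (e + 1) ∈ monIdeal n (e + 1) :=
    Ideal.subset_span ⟨j, rfl⟩
  suffices h : ∃ b, lowerAt e i (a * X j ^ (e + 1)) = b * X j ^ (e + 1) by
    obtain ⟨b, hb⟩ := h
    rw [hb]
    exact Ideal.mul_mem_left _ _ hX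
  by_cases hij : j = i
  · subst hij
    rcases e with _ | e
    · refine ⟨-(2 * pderiv j a + X j * pderiv j (pderiv j a)), ?_⟩
      simp only [lowerAt, pderiv_mul, pderiv_X_self, map_add, pderiv_one, pow_one, zero_add,
        Nat.cast_zero]
      ring
    · -- the terms in which both derivatives, or the single one, hit the power of `X j` cancel
      refine ⟨((e + 1 : ℕ) : MvPolynomial (Fin n) ℚ) * pderiv j a
        - 2 * ((e + 2 : ℕ) : MvPolynomial (Fin n) ℚ) * pderiv j a
        - X j * pderiv j (pderiv j a), ?_⟩
      simp only [lowerAt, pderiv_mul, pderiv_pow, pderiv_X_self, map_add, mul_one,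
        Derivation.map_natCast, Nat.add_sub_cancel]
      push_cast
      ring
  · refine ⟨lowerAt e i a, ?_⟩
    simp only [lowerAt, pderiv_mul, pderiv_pow, pderiv_X_of_ne hij, mul_zero, add_zero]
    ring

lemma lowerAt_add {n : ℕ} (e : ℕ) (i : Fin n) (p q : MvPolynomial (Fin n) ℚ) :
    lowerAt e i (p + q) = lowerAt e i p + lowerAt e i q := by
  simp only [lowerAt, map_add]; ring

lemma lower_mem {n e : ℕ} {p : MvPolynomial (Fin n) ℚ} (hp : p ∈ monIdeal n (e + 1)) :
    lower e p ∈ monIdeal n (e + 1) := by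
  refine Ideal.sum_mem _ fun i _ => ?_
  rw [monIdeal, Ideal.span, Submodule.mem_span_range_iff_exists_fun] at hp
  obtain ⟨c, rfl⟩ := hp
  have key : ∀ s : Finset (Fin n),
      lowerAt e i (∑ j ∈ s, c j • (X j : MvPolynomial (Fin n) ℚ) ^ (e + 1)) ∈
        monIdeal n (e + 1) := by
    intro s
    induction s using Finset.induction_on with
    | empty => simp [lowerAt]
    | insert j s hj ih =>
      rw [Finset.sum_insert hj, lowerAt_add]
      exact Ideal.add_mem _ (lowerAt_mul_X_pow_mem e i j (c j)) ih
  exact key _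

lemma lower_homog {n e j : ℕ} {p : MvPolynomial (Fin n) ℚ} (hp : p.IsHomogeneous (j + 1)) :
    (lower e p).IsHomogeneous j := by
  refine IsHomogeneous.sum _ _ _ fun i _ => ?_
  have h1 : (pderiv i p).IsHomogeneous j := hp.pderiv
  refine IsHomogeneous.sub ?_ ?_
  · simpa using h1.C_mul (e : ℚ)
  · rcases j with _ | j
    · have : pderiv i (pderiv i p) = 0 := by
        rw [← mem_homogeneousSubmodule, homogeneousSubmodule_zero] at h1
        obtain ⟨c, hc⟩ := Submodule.mem_one.mp h1
        rw [← hc]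
        exact pderiv_C
      rw [this, mul_zero]
      exact isHomogeneous_zero _ _ _
    · have h2 := (isHomogeneous_X ℚ i).mul (h1.pderiv (i := i))
      rwa [Nat.add_sub_cancel, add_comm 1 j] at h2

lemma lower_of_homog_zero {n e : ℕ} {p : MvPolynomial (Fin n) ℚ} (hp : p.IsHomogeneous 0) :
    lower e p = 0 := by
  rw [← mem_homogeneousSubmodule, homogeneousSubmodule_zero] at hp
  obtain ⟨c, rfl⟩ := Submodule.mem_one.mp hp
  refine Finset.sum_eq_zero fun i _ => ?_
  have : pderiv i (algebraMap ℚ (MvPolynomial (Fin n) ℚ) c) = 0 := pderiv_C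
  simp only [lowerAt, this, map_zero, mul_zero, sub_zero]

/-- The relation `[F, E] = -H` of the `sl₂`-action, evaluated in degree `m`. -/
lemma lower_ell_mul {n e m : ℕ} {q : MvPolynomial (Fin n) ℚ} (hq : q.IsHomogeneous m) :
    lower e (ell n * q) = ell n * lower e q + C ((n * e : ℚ) - 2 * m) * q := by
  have hell : ∀ i, pderiv i (ell n) = 1 := by
    intro i
    simp [ell, pderiv_X, Pi.single_apply]
  have h : ∀ i, lowerAt e i (ell n * q) =
      ell n * lowerAt e i q + ((e : MvPolynomial (Fin n) ℚ) * q - 2 * (X i * pderiv i q)) := by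
    intro i
    simp only [lowerAt, pderiv_mul, hell, map_add, one_mul]
    ring
  simp only [lower, h, Finset.sum_add_distrib, Finset.sum_sub_distrib, ← Finset.mul_sum,
    hq.sum_X_mul_pderiv]
  simp only [Finset.sum_const, Finset.card_univ, Fintype.card_fin, nsmul_eq_mul, map_sub, map_mul,
    map_natCast, map_ofNat]
  ring

lemma lower_pow_mul {n e j : ℕ} {p : MvPolynomial (Fin n) ℚ} (hp : p.IsHomogeneous j) (k : ℕ) :
    lower e (ell n ^ (k + 1) * p) = ell n ^ (k + 1) * lower e p +
      C ((k + 1 : ℚ) * (n * e - 2 * j - k)) * (ell n ^ k * p) := by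
  induction k with
  | zero => simp [lower_ell_mul hp]
  | succ k ih =>
    rw [pow_succ', mul_assoc, lower_ell_mul ((ell_pow_homog n (k + 1)).mul hp), ih]
    simp only [map_mul, map_sub, map_add, map_natCast, map_one, Nat.cast_add, Nat.cast_one,
      map_ofNat]
    ring

/-! ### The strong Lefschetz property -/

lemma C_mul_mem_cancel {n d : ℕ} {c : ℚ} (hc : c ≠ 0) {p : MvPolynomial (Fin n) ℚ}
    (h : C c * p ∈ monIdeal n d) : p ∈ monIdeal n d := by
  have := Ideal.mul_mem_left _ (C c⁻¹) h
  rwa [← mul_assoc, ← C_mul, inv_mul_cancel₀ hc, C_1, one_mul] at this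

/-- Multiplication by `ℓ^k` is injective from degree `j` of `ℚ[x₁, …, x_n] / (x₁^d, …, x_n^d)`
as long as `2j + k ≤ n (d - 1)`; here `d = e + 1`. -/
lemma mem_of_pow_mul_mem {n e : ℕ} (j : ℕ) : ∀ (k : ℕ) {p : MvPolynomial (Fin n) ℚ},
    p.IsHomogeneous j → 2 * j + k ≤ n * e → ell n ^ k * p ∈ monIdeal n (e + 1) →
      p ∈ monIdeal n (e + 1) := by
  induction j with
  | zero =>
    intro k
    induction k with
    | zero => intro p _ _ h; simpa using h
    | succ k ih =>
      intro p hp hk h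
      have h1 := lower_mem h
      rw [lower_pow_mul hp, lower_of_homog_zero hp, mul_zero, zero_add] at h1
      refine ih hp (by omega) (C_mul_mem_cancel (mul_ne_zero (by positivity) ?_) h1)
      have : ((2 * 0 + (k + 1) : ℕ) : ℚ) ≤ ((n * e : ℕ) : ℚ) := by exact_mod_cast hk
      push_cast at this ⊢
      linarith
  | succ j ihj =>
    intro k
    induction k with
    | zero => intro p _ _ h; simpa using h
    | succ k ih =>
      intro p hp hk h
      have h1 := lower_mem h
      rw [lower_pow_mul hp] at h1
      have hF : lower e p ∈ monIdeal n (e + 1) := by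
        -- multiplying by `ℓ` once more turns the second summand into a multiple of `ℓ^(k+1) p`
        refine ihj (k + 1 + 1) (lower_homog hp) (by omega) ?_
        have h2 := Ideal.sub_mem _ (Ideal.mul_mem_left _ (ell n) h1)
          (Ideal.mul_mem_left _ (C ((k + 1 : ℚ) * (n * e - 2 * (j + 1 : ℕ) - k))) h)
        convert h2 using 1
        ring
      have h3 := (Ideal.add_mem_iff_right _ (Ideal.mul_mem_left _ (ell n ^ (k + 1)) hF)).mp h1
      refine ih hp (by omega) (C_mul_mem_cancel (mul_ne_zero (by positivity) ?_) h3)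
      have : ((2 * (j + 1) + (k + 1) : ℕ) : ℚ) ≤ ((n * e : ℕ) : ℚ) := by exact_mod_cast hk
      push_cast at this ⊢
      linarith

/-- The elements of the ideal `(x₁^d, …, x_n^d)` in degree `i`. -/
abbrev monPart (n d i : ℕ) : Submodule ℚ (homogeneousSubmodule (Fin n) ℚ i) :=
  Submodule.comap (homogeneousSubmodule (Fin n) ℚ i).subtype
    (Submodule.restrictScalars ℚ (monIdeal n d))

/-- The degree-`i` component of `ℚ[x₁, …, x_n] / (x₁^d, …, x_n^d)`. -/
abbrev monComponent (n d i : ℕ) := (homogeneousSubmodule (Fin n) ℚ i) ⧸ monPart n d i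

/-- Exponent vectors of the monomials of degree `i` with all exponents below `d`. -/
def expSet (n d i : ℕ) : Finset (Fin n → ℕ) :=
  (Fintype.piFinset fun _ : Fin n => Finset.range d).filter fun m => ∑ j, m j = i

/-- The coefficients of a form of degree `i` at the monomials with all exponents below `d`. -/
def coeffMap (n d i : ℕ) : homogeneousSubmodule (Fin n) ℚ i →ₗ[ℚ] (expSet n d i → ℚ) :=
  LinearMap.pi fun m =>
    (lcoeff ℚ (Finsupp.equivFunOnFinite.symm m.1)) ∘ₗ (homogeneousSubmodule (Fin n) ℚ i).subtype

lemma coeffMap_apply {n d i : ℕ} (p : homogeneousSubmodule (Fin n) ℚ i) (m : expSet n d i) :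
    coeffMap n d i p m = coeff (Finsupp.equivFunOnFinite.symm m.1) p.1 := rfl

lemma ker_coeffMap (n d i : ℕ) : LinearMap.ker (coeffMap n d i) = monPart n d i := by
  ext ⟨p, hp⟩
  rw [LinearMap.mem_ker, Submodule.mem_comap, Submodule.restrictScalars_mem, mem_monIdeal]
  constructor
  · intro h m hm
    by_cases hdeg : m.degree = i
    · have := congrFun h ⟨m, by
        simp [expSet, hm, ← hdeg, Finsupp.degree_eq_sum]⟩
      rw [coeffMap_apply] at this
      simpa using this
    · exact IsHomogeneous.coeff_eq_zero hp hdeg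
  · intro h
    ext m
    rw [coeffMap_apply]
    refine h _ fun j => ?_
    have := m.2
    simp only [expSet, Finset.mem_filter, Fintype.mem_piFinset, Finset.mem_range] at this
    exact this.1 j

lemma coeffMap_surjective (n d i : ℕ) : Function.Surjective (coeffMap n d i) := by
  intro f
  refine ⟨⟨∑ m, monomial (Finsupp.equivFunOnFinite.symm m.1) (f m), ?_⟩, ?_⟩
  · refine Submodule.sum_mem _ fun m _ => isHomogeneous_monomial _ ?_
    have := m.2
    simp only [expSet, Finset.mem_filter] at this
    rw [Finsupp.degree_eq_sum]
    simpa using this.2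
  · ext m
    rw [coeffMap_apply]
    simp [coeff_sum, coeff_monomial]

/-- The monomials with all exponents below `d` form a basis of `ℚ[x₁, …, x_n]/(x₁^d, …, x_n^d)`. -/
def monComponentEquiv (n d i : ℕ) : monComponent n d i ≃ₗ[ℚ] (expSet n d i → ℚ) :=
  (Submodule.quotEquivOfEq _ _ (ker_coeffMap n d i).symm).trans
    ((coeffMap n d i).quotKerEquivOfSurjective (coeffMap_surjective n d i))

instance finite_monComponent (n d i : ℕ) : Module.Finite ℚ (monComponent n d i) :=
  Module.Finite.equiv (monComponentEquiv n d i).symm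

lemma finrank_monComponent (n d i : ℕ) :
    Module.finrank ℚ (monComponent n d i) = (expSet n d i).card := by
  rw [(monComponentEquiv n d i).finrank_eq]
  simp

lemma coeff_geom_pow (n d i : ℕ) :
    ((∑ j ∈ Finset.range d, Polynomial.X ^ j) ^ n : Polynomial ℤ).coeff i =
      (expSet n d i).card := by
  have h : ((∑ j ∈ Finset.range d, Polynomial.X ^ j) ^ n : Polynomial ℤ) =
      ∑ m ∈ Fintype.piFinset fun _ : Fin n => Finset.range d, Polynomial.X ^ (∑ j, m j) := by
    simp_rw [← Finset.prod_pow_eq_pow_sum]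
    rw [← Finset.prod_univ_sum]
    simp
  rw [h, Polynomial.finsetSum_coeff]
  simp only [Polynomial.coeff_X_pow, expSet, Finset.card_filter]
  push_cast
  exact Finset.sum_congr rfl fun m _ => by simp [eq_comm]

lemma sum_add_sum_sub {n e : ℕ} {m : Fin n → ℕ} (hm : ∀ j, m j ≤ e) :
    ∑ j, m j + ∑ j, (e - m j) = n * e := by
  rw [← Finset.sum_add_distrib, Finset.sum_congr rfl fun j _ => Nat.add_sub_cancel' (hm j)]
  simp

/-- The symmetry of the Hilbert function, by complementing exponents. -/
lemma card_expSet_symm {n e i i' : ℕ} (h : i + i' = n * e) :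
    (expSet n (e + 1) i).card = (expSet n (e + 1) i').card := by
  refine Finset.card_nbij' (fun m j => e - m j) (fun m j => e - m j) ?_ ?_ ?_ ?_
  all_goals
    intro m hm
    simp only [expSet, Finset.coe_filter, Set.mem_ofPred_eq, Fintype.mem_piFinset,
      Finset.mem_range, Nat.lt_succ_iff] at hm ⊢
  · have := sum_add_sum_sub hm.1
    exact ⟨fun j => Nat.sub_le _ _, by omega⟩
  · have := sum_add_sum_sub hm.1
    exact ⟨fun j => Nat.sub_le _ _, by omega⟩
  · funext j
    have := hm.1 j
    omega
  · funext j
    have := hm.1 j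
    omega

lemma expSet_eq_empty {n e i : ℕ} (h : n * e < i) : expSet n (e + 1) i = ∅ := by
  refine Finset.eq_empty_of_forall_notMem fun m hm => ?_
  simp only [expSet, Finset.mem_filter, Fintype.mem_piFinset, Finset.mem_range,
    Nat.lt_succ_iff] at hm
  have := sum_add_sum_sub hm.1
  omega

/-- Multiplication by `ℓ^k` from forms of degree `j` to forms of degree `k + j`. -/
def mulP (n k j : ℕ) :
    homogeneousSubmodule (Fin n) ℚ j →ₗ[ℚ] homogeneousSubmodule (Fin n) ℚ (k + j) :=
  ((LinearMap.mulLeft ℚ (ell n ^ k)).comp (homogeneousSubmodule (Fin n) ℚ j).subtype).codRestrict _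
    fun p => (ell_pow_homog n k).mul p.2

/-- Multiplication by `ℓ^k` from degree `j` to degree `k + j` of
`ℚ[x₁, …, x_n] / (x₁^d, …, x_n^d)`. -/
def mulQ (n d k j : ℕ) : monComponent n d j →ₗ[ℚ] monComponent n d (k + j) :=
  Submodule.mapQ _ _ (mulP n k j) fun _ hp => (monIdeal n d).mul_mem_left (ell n ^ k) hp

lemma mulQ_mk {n d k j : ℕ} (p : homogeneousSubmodule (Fin n) ℚ j) :
    mulQ n d k j (Submodule.Quotient.mk p) = Submodule.Quotient.mk (mulP n k j p) := rfl

lemma mulQ_injective {n e k j : ℕ} (h : 2 * j + k ≤ n * e) :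
    Function.Injective (mulQ n (e + 1) k j) := by
  rw [injective_iff_map_eq_zero]
  intro x
  obtain ⟨p, rfl⟩ := Submodule.Quotient.mk_surjective _ x
  intro hx
  rw [mulQ_mk, Submodule.Quotient.mk_eq_zero] at hx
  rw [Submodule.Quotient.mk_eq_zero]
  exact mem_of_pow_mul_mem j k p.2 h hx

lemma mulQ_surjective {n e k j : ℕ} (h : n * e ≤ 2 * j + k) :
    Function.Surjective (mulQ n (e + 1) k j) := by
  by_cases hN : n * e < k + j
  · have h0 : Module.finrank ℚ (monComponent n (e + 1) (k + j)) = 0 := by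
      rw [finrank_monComponent, expSet_eq_empty hN, Finset.card_empty]
    have := Module.finrank_zero_iff.mp h0
    exact fun y => ⟨0, Subsingleton.elim _ _⟩
  · -- `ℓ^(N-2m)` is bijective from the mirror degree `m = N - (k + j)` to degree `k + j`, and it
    -- factors through degree `j`
    obtain ⟨m, hm⟩ : ∃ m, m + (k + j) = n * e := ⟨n * e - (k + j), by omega⟩
    obtain ⟨l, rfl⟩ : ∃ l, j = l + m := ⟨j - m, by omega⟩
    have hinj : Function.Injective ((mulQ n (e + 1) k (l + m)).comp (mulQ n (e + 1) l m)) := by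
      rw [injective_iff_map_eq_zero]
      intro x
      obtain ⟨p, rfl⟩ := Submodule.Quotient.mk_surjective _ x
      intro hx
      rw [LinearMap.comp_apply, mulQ_mk, mulQ_mk, Submodule.Quotient.mk_eq_zero] at hx
      rw [Submodule.Quotient.mk_eq_zero]
      refine mem_of_pow_mul_mem m (k + l) p.2 (by omega) ?_
      have hx' : ell n ^ k * (ell n ^ l * p.1) ∈ monIdeal n (e + 1) := hx
      rwa [← mul_assoc, ← pow_add] at hx'
    have hdim : Module.finrank ℚ (monComponent n (e + 1) m) =
        Module.finrank ℚ (monComponent n (e + 1) (k + (l + m))) := by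
      rw [finrank_monComponent, finrank_monComponent, card_expSet_symm hm]
    have hsurj := (LinearMap.injective_iff_surjective_of_finrank_eq_finrank hdim).mp hinj
    rw [LinearMap.coe_comp] at hsurj
    exact hsurj.of_comp

/-! ### The quotient by `ℓ^d` -/

lemma lefIdeal_eq (n d : ℕ) : lefIdeal n d = monIdeal n d ⊔ Ideal.span {ell n ^ d} :=
  Ideal.span_union _ _

/-- The elements of `(x₁^d, …, x_n^d, ℓ^d)` in degree `i`. -/
abbrev lefPart (n d i : ℕ) : Submodule ℚ (homogeneousSubmodule (Fin n) ℚ i) :=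
  Submodule.comap (homogeneousSubmodule (Fin n) ℚ i).subtype
    (Submodule.restrictScalars ℚ (lefIdeal n d))

lemma monPart_le_lefPart (n d i : ℕ) : monPart n d i ≤ lefPart n d i := by
  intro p hp
  rw [Submodule.mem_comap, Submodule.restrictScalars_mem] at hp ⊢
  rw [lefIdeal_eq]
  exact Ideal.mem_sup_left hp

lemma homogeneousComponent_ell_pow_mul (n d j : ℕ) (q : MvPolynomial (Fin n) ℚ) :
    homogeneousComponent (d + j) (ell n ^ d * q) = ell n ^ d * homogeneousComponent j q := by
  conv_lhs => rw [← sum_homogeneousComponent q, Finset.mul_sum, map_sum]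
  have h : ∀ l, homogeneousComponent (d + j) (ell n ^ d * homogeneousComponent l q) =
      if l = j then ell n ^ d * homogeneousComponent l q else 0 := by
    intro l
    rw [homogeneousComponent_of_mem
      ((ell_pow_homog n d).mul (homogeneousComponent_isHomogeneous l q))]
    simp [eq_comm]
  simp only [h, Finset.sum_ite_eq', Finset.mem_range]
  split_ifs with hj
  · rfl
  · rw [homogeneousComponent_eq_zero j q (by omega), mul_zero]

lemma homogeneousComponent_ell_pow_mul_of_lt {n d i : ℕ} (hi : i < d)
    (q : MvPolynomial (Fin n) ℚ) : homogeneousComponent i (ell n ^ d * q) = 0 := by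
  rw [← sum_homogeneousComponent q, Finset.mul_sum, map_sum]
  refine Finset.sum_eq_zero fun l _ => ?_
  rw [homogeneousComponent_of_mem
    ((ell_pow_homog n d).mul (homogeneousComponent_isHomogeneous l q)), if_neg (by omega)]

/-- A form of degree `i` in `(x₁^d, …, x_n^d, ℓ^d)` is congruent modulo `(x₁^d, …, x_n^d)` to the
degree-`i` part of a multiple of `ℓ^d`. -/
lemma exists_of_mem_lefIdeal {n d i : ℕ} {p : MvPolynomial (Fin n) ℚ} (hp : p.IsHomogeneous i)
    (h : p ∈ lefIdeal n d) :
    ∃ q, p - homogeneousComponent i (ell n ^ d * q) ∈ monIdeal n d := by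
  rw [lefIdeal_eq] at h
  obtain ⟨r, hr, s, hs, rfl⟩ := Submodule.mem_sup.mp h
  obtain ⟨q, rfl⟩ := Ideal.mem_span_singleton'.mp hs
  refine ⟨q, ?_⟩
  have h1 := homogeneousComponent_mem_monIdeal (i := i) hr
  rw [← homogeneousComponent_eq_self hp, map_add, mul_comm q, add_sub_cancel_right]
  exact h1

lemma lefPart_eq_of_lt {n d i : ℕ} (hi : i < d) : lefPart n d i = monPart n d i := by
  refine le_antisymm (fun p hp => ?_) (monPart_le_lefPart n d i)
  obtain ⟨q, hq⟩ := exists_of_mem_lefIdeal p.2 hp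
  rw [homogeneousComponent_ell_pow_mul_of_lt hi, sub_zero] at hq
  exact hq

lemma map_lefPart (n d j : ℕ) :
    (lefPart n d (d + j)).map (monPart n d (d + j)).mkQ = LinearMap.range (mulQ n d d j) := by
  ext x
  rw [Submodule.mem_map, LinearMap.mem_range]
  constructor
  · rintro ⟨p, hp, rfl⟩
    obtain ⟨q, hq⟩ := exists_of_mem_lefIdeal p.2 hp
    rw [homogeneousComponent_ell_pow_mul] at hq
    refine ⟨Submodule.Quotient.mk ⟨homogeneousComponent j q, homogeneousComponent_mem j q⟩, ?_⟩
    rw [mulQ_mk, Submodule.mkQ_apply, eq_comm, Submodule.Quotient.eq]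
    exact hq
  · rintro ⟨y, rfl⟩
    obtain ⟨q, rfl⟩ := Submodule.Quotient.mk_surjective _ y
    refine ⟨mulP n d j q, ?_, rfl⟩
    rw [Submodule.mem_comap, Submodule.restrictScalars_mem, lefIdeal_eq]
    exact Ideal.mem_sup_right (Ideal.mul_mem_right _ _ (Ideal.mem_span_singleton_self _))

lemma finrank_lefComponent_add (n d j : ℕ) :
    Module.finrank ℚ (lefComponent n d (d + j)) +
      Module.finrank ℚ (LinearMap.range (mulQ n d d j)) = (expSet n d (d + j)).card := by
  rw [← finrank_monComponent,
    ← Submodule.finrank_quotient_add_finrank (LinearMap.range (mulQ n d d j)), ← map_lefPart,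
    (Submodule.quotientQuotientEquivQuotient _ _ (monPart_le_lefPart n d (d + j))).finrank_eq]

/-- `dim_ℚ B_i = max {0, a_i}`, where the `a_i` are the coefficients of
`(1 - t^d)^{n+1}/(1-t)^n = (1 - t^d)·(1 + t + ⋯ + t^{d-1})^n`. -/
theorem dim_lefComponent (n d : ℕ) (hn : 1 ≤ n) (hd : 1 ≤ d) (i : ℕ) :
    (Module.finrank ℚ (lefComponent n d i) : ℤ) =
      max 0 (((1 - Polynomial.X ^ d) *
        (∑ j ∈ Finset.range d, Polynomial.X ^ j) ^ n : Polynomial ℤ).coeff i) := by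
  obtain ⟨e, rfl⟩ : ∃ e, d = e + 1 := ⟨d - 1, by omega⟩
  rw [sub_mul, one_mul, Polynomial.coeff_sub, Polynomial.coeff_X_pow_mul', coeff_geom_pow]
  by_cases hi : i < e + 1
  · rw [if_neg (by omega), sub_zero, max_eq_right (by positivity), ← finrank_monComponent]
    exact congrArg Nat.cast
      (Submodule.quotEquivOfEq _ _ (lefPart_eq_of_lt (n := n) hi)).finrank_eq
  · obtain ⟨j, rfl⟩ : ∃ j, i = e + 1 + j := ⟨i - (e + 1), by omega⟩
    rw [if_pos (by omega), Nat.add_sub_cancel_left, coeff_geom_pow]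
    have h := finrank_lefComponent_add n (e + 1) j
    rcases le_total (2 * j + (e + 1)) (n * e) with hle | hle
    · rw [LinearMap.finrank_range_of_inj (mulQ_injective hle), finrank_monComponent] at h
      omega
    · have hs := LinearMap.range_eq_top.mpr (mulQ_surjective hle)
      have hc := LinearMap.finrank_range_le (mulQ n (e + 1) (e + 1) j)
      rw [hs, finrank_top, finrank_monComponent] at h hc
      rw [finrank_monComponent] at hc
      omega

end
end

section
/- One has end(B) = ⌊(n+1)(d−1)/2⌋; explicitly, the homogeneous component B_μ is nonzero for μ = ⌊(n+1)(d−1)/2⌋ and is zero for every μ > ⌊(n+1)(d−1)/2⌋. -/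
/-!
Write `d = e + 1` and `L` for multiplication by the sum of all variables.

*Vanishing.* Substituting `x₀ = -(x₁ + ⋯ + x_n)` identifies `B` with
`ℚ[x₀, …, x_n] / (x_i ^ (e + 1), L)`. The operator `Λ = ∑ (e ∂_i - x_i ∂_i²)` preserves the ideal
`(x_i ^ (e + 1))`, and `[Λ, L]` is the scalar `λ = (n + 1) e - 2 μ` in degree `μ`: this is the
`sl₂`-action behind the strong Lefschetz property. If `λ < 0`, the identity
`Λ L^(k+1) = L^(k+1) Λ + (k+1) (λ - k) L^k` has nonzero scalars, and induction on the least power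
of `L` killing `f` shows that a homogeneous `f` of degree `μ` lies in the image of `L` modulo
`(x_i ^ (e + 1))` (`mem_of_pow_mul_mem`). Some power of `L` kills `f` for degree reasons.

*Nonvanishing.* By apolarity (a polynomial `p` acts on `F` by the value at `0` of `p(∂) F`), it
suffices to find a nonzero `F` of degree `⌊(n + 1) e / 2⌋` killed by all `∂_j ^ (e + 1)` and by
`(∑ ∂_j) ^ (e + 1)`. With `x₀ = x_{n+1} = 0`, the polynomial
`F = ∏_{i=0}^{n} (x_i - x_{i+1}) ^ (e_i)`, whose exponents alternate between `⌊e/2⌋` and `⌈e/2⌉`,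
works (`pathPoly`): each `x_j` occurs in degree `e_{j-1} + e_j = e`, all factors except the first
and the last are translation invariant, and `e_0 + e_n ≤ e`.
-/

open MvPolynomial

noncomputable section

/-! ### Vanishing above the middle degree -/

section Vanishing

variable {σ : Type*} [Fintype σ]

/-- The monomial complete intersection ideal `(x_i ^ d)`. -/
def powIdeal (σ : Type*) (d : ℕ) : Ideal (MvPolynomial σ ℚ) :=
  Ideal.span (Set.range fun j : σ => (X j : MvPolynomial σ ℚ) ^ d)

/-- The operator `Λ = ∑ j, (e ∂_j - x_j ∂_j²)` that lowers degrees by one; together with multiplication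
by `∑ j, x_j` it generates an action of `sl₂` on the polynomial ring. -/
def lowerOp (e : ℕ) (f : MvPolynomial σ ℚ) : MvPolynomial σ ℚ :=
  ∑ j, ((e : MvPolynomial σ ℚ) * pderiv j f - X j * pderiv j (pderiv j f))

lemma lowerOp_add (e : ℕ) (f g : MvPolynomial σ ℚ) :
    lowerOp e (f + g) = lowerOp e f + lowerOp e g := by
  simp only [lowerOp, map_add, ← Finset.sum_add_distrib]
  exact Finset.sum_congr rfl fun j _ => by ring

/-- The terms of `lowerOp e (x_i ^ (e + 1) * q)` in which only `x_i ^ e` survives have total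
coefficient `e (e + 1) - (e + 1) e = 0`, so every remaining term is divisible by `x_i ^ (e + 1)`. -/
lemma lowerOp_mem (e : ℕ) {f : MvPolynomial σ ℚ} (hf : f ∈ powIdeal σ (e + 1)) :
    lowerOp e f ∈ powIdeal σ (e + 1) := by
  classical
  have hX (i : σ) : (X i : MvPolynomial σ ℚ) ^ (e + 1) ∈ powIdeal σ (e + 1) :=
    Ideal.subset_span ⟨i, rfl⟩
  suffices h : ∀ q, lowerOp e (q * f) ∈ powIdeal σ (e + 1) by simpa using h 1
  induction hf using Submodule.span_induction with
  | zero => simp [lowerOp]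
  | add f g _ _ hf hg => intro q; rw [mul_add, lowerOp_add]; exact add_mem (hf q) (hg q)
  | smul r f _ hf => intro q; rw [smul_eq_mul, ← mul_assoc]; exact hf _
  | mem f hf =>
    obtain ⟨i, rfl⟩ := hf
    intro q
    refine Ideal.sum_mem _ fun j _ => ?_
    rcases eq_or_ne i j with rfl | hij
    · have key : (e : MvPolynomial σ ℚ) * pderiv i (q * X i ^ (e + 1))
          - X i * pderiv i (pderiv i (q * X i ^ (e + 1)))
          = ((e : MvPolynomial σ ℚ) * pderiv i q - X i * pderiv i (pderiv i q) - 2 * ((e : MvPolynomial σ ℚ) + 1) * pderiv i q)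
            * X i ^ (e + 1) := by
        rcases e with _ | e
        · simp; ring
        · simp; ring
      simp only [key]
      exact Ideal.mul_mem_left _ _ (hX i)
    · have h0 : pderiv j ((X i : MvPolynomial σ ℚ) ^ (e + 1)) = 0 := by
        rw [pderiv_pow, pderiv_X_of_ne hij, mul_zero]
      simp only [pderiv_mul, h0, mul_zero, add_zero]
      rw [← mul_assoc, ← mul_assoc, ← sub_mul]
      exact Ideal.mul_mem_left _ _ (hX i)

/-- The commutation relation `[Λ, L] = H` of the `sl₂`-triple, where `L` is
multiplication by `∑ j, x_j`, `Λ` is `lowerOp e`, and `H` acts on degree `μ` by the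
weight `|σ| e - 2 μ`. -/
lemma lowerOp_mul_sum (e μ : ℕ) {f : MvPolynomial σ ℚ} (hf : f.IsHomogeneous μ) :
    lowerOp e ((∑ j, X j) * f) = (∑ j, X j) * lowerOp e f
      + ((Fintype.card σ * e - 2 * μ : ℤ) : MvPolynomial σ ℚ) * f := by
  classical
  have h1 (j : σ) : pderiv j (∑ i, (X i : MvPolynomial σ ℚ)) = 1 := by
    simp [map_sum, Pi.single_apply]
  have h2 := hf.sum_X_mul_pderiv
  have h3 (j : σ) : (e : MvPolynomial σ ℚ) * pderiv j ((∑ i, X i) * f)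
      - X j * pderiv j (pderiv j ((∑ i, X i) * f))
      = (∑ i, X i) * ((e : MvPolynomial σ ℚ) * pderiv j f - X j * pderiv j (pderiv j f)) +
        ((e : MvPolynomial σ ℚ) * f - 2 * (X j * pderiv j f)) := by
    simp only [pderiv_mul, h1, map_add, pderiv_one]
    simp
    ring
  simp only [lowerOp, h3, Finset.sum_add_distrib, Finset.sum_sub_distrib, ← Finset.mul_sum, h2]
  simp
  ring

/-- The relation `Λ L^(k+1) = L^(k+1) Λ + (k+1) (λ - k) L^k` on vectors of weight `λ`. -/
lemma lowerOp_pow_mul (e μ k : ℕ) {f : MvPolynomial σ ℚ} (hf : f.IsHomogeneous μ) :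
    lowerOp e ((∑ j, X j) ^ (k + 1) * f) = (∑ j, X j) ^ (k + 1) * lowerOp e f
      + (((k + 1) * (Fintype.card σ * e - 2 * μ - k) : ℤ) : MvPolynomial σ ℚ)
        * ((∑ j, X j) ^ k * f) := by
  have hL : (∑ j, (X j : MvPolynomial σ ℚ)).IsHomogeneous 1 :=
    IsHomogeneous.sum _ _ _ fun i _ => isHomogeneous_X _ i
  induction k with
  | zero => simpa using lowerOp_mul_sum e μ hf
  | succ k ih =>
    have h : ((∑ j, X j) ^ (k + 1) * f).IsHomogeneous (1 * (k + 1) + μ) := (hL.pow _).mul hf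
    rw [pow_succ' _ (k + 1), mul_assoc, lowerOp_mul_sum e _ h, ih]
    push_cast
    ring

lemma isHomogeneous_sum_mul_lowerOp (e : ℕ) {μ : ℕ} (hμ : 0 < μ) {f : MvPolynomial σ ℚ}
    (hf : f.IsHomogeneous μ) : ((∑ j, X j) * lowerOp e f).IsHomogeneous μ := by
  obtain ⟨m, rfl⟩ : ∃ m, μ = 1 + m := ⟨μ - 1, by omega⟩
  refine (IsHomogeneous.sum _ _ _ fun i _ => isHomogeneous_X _ i).mul
    (IsHomogeneous.sum _ _ _ fun j _ => IsHomogeneous.sub ?_ ?_)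
  · have := (hf.pderiv (i := j)).C_mul (e : ℚ)
    simpa using this
  · rcases m with _ | m
    · have h : (pderiv j f).IsHomogeneous 0 := hf.pderiv
      rw [← totalDegree_zero_iff_isHomogeneous, totalDegree_eq_zero_iff_eq_C] at h
      rw [h, pderiv_C, mul_zero]
      exact isHomogeneous_zero _ _ _
    · have h := (isHomogeneous_X ℚ j).mul ((hf.pderiv (i := j)).pderiv (i := j))
      rwa [show 1 + (1 + (m + 1) - 1 - 1) = m + 1 by omega] at h

/-- Above the middle degree, a homogeneous `f` killed by `L ^ k` modulo `(x_i ^ (e + 1))` lies in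
every ideal `J` containing `L` and all `x_i ^ (e + 1)`. Inductive step: the polynomial `L Λ f + c f` with
`c = (k + 1) (λ - k) ≠ 0` is killed by `L ^ k` whenever `f` is killed by `L ^ (k + 1)`. -/
lemma mem_of_pow_mul_mem_s4 (e : ℕ) {μ : ℕ} (hμ : Fintype.card σ * e < 2 * μ)
    {J : Ideal (MvPolynomial σ ℚ)} (hJ : powIdeal σ (e + 1) ≤ J) (hL : ∑ j, X j ∈ J) (k : ℕ) :
    ∀ f : MvPolynomial σ ℚ, f.IsHomogeneous μ → (∑ j, X j) ^ k * f ∈ powIdeal σ (e + 1) →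
      f ∈ J := by
  induction k with
  | zero => intro f _ hf; exact hJ (by simpa using hf)
  | succ k ih =>
    intro f hf hk
    set c : ℤ := (k + 1) * (Fintype.card σ * e - 2 * μ - k) with hc
    have hc0 : (c : ℚ) ≠ 0 := by
      have : ((Fintype.card σ * e : ℕ) : ℤ) < 2 * μ := by exact_mod_cast hμ
      push_cast at this
      rw [Int.cast_ne_zero, hc]
      exact mul_ne_zero (by omega) (by linarith)
    have h1 := lowerOp_mem e hk
    rw [lowerOp_pow_mul e μ k hf, ← hc] at h1
    have hC : (c : MvPolynomial σ ℚ) = C (c : ℚ) := by simp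
    have h2 : (∑ j, X j) * lowerOp e f + (c : MvPolynomial σ ℚ) * f ∈ J := by
      refine ih _ ((isHomogeneous_sum_mul_lowerOp e (by omega) hf).add ?_) ?_
      · rw [hC]; exact hf.C_mul _
      · convert h1 using 1; ring
    have h3 : (c : MvPolynomial σ ℚ) * f ∈ J :=
      (Ideal.add_mem_iff_right _ (Ideal.mul_mem_right _ _ hL)).1 h2
    have h4 := J.mul_mem_left (C (c : ℚ)⁻¹) h3
    rwa [hC, ← mul_assoc, ← C_mul, inv_mul_cancel₀ hc0, C_1, one_mul] at h4

/-- By the pigeonhole principle a monomial of degree exceeding `|σ| e` has an exponent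
exceeding `e`. -/
lemma mem_powIdeal_of_lt (e : ℕ) {μ : ℕ} (hμ : Fintype.card σ * e < μ) {f : MvPolynomial σ ℚ}
    (hf : f.IsHomogeneous μ) : f ∈ powIdeal σ (e + 1) := by
  rw [f.as_sum]
  refine Ideal.sum_mem _ fun α hα => ?_
  have hdeg : ∑ i, α i = μ := by
    rw [← Finsupp.degree_eq_sum]
    by_contra h
    exact (mem_support_iff.1 hα) (hf.coeff_eq_zero h)
  obtain ⟨i, hi⟩ : ∃ i, e < α i := by
    by_contra! h
    have : ∑ i, α i ≤ ∑ _i : σ, e := Finset.sum_le_sum fun i _ => h i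
    simp at this
    omega
  refine Ideal.mem_of_dvd _ ?_ (Ideal.subset_span ⟨i, rfl⟩)
  simp only [X_pow_eq_monomial, monomial_dvd_monomial]
  exact ⟨Or.inr (Finsupp.single_le_iff.2 hi), one_dvd _⟩

lemma mem_of_two_mul_lt (e : ℕ) {μ : ℕ} (hμ : Fintype.card σ * e < 2 * μ)
    {J : Ideal (MvPolynomial σ ℚ)} (hJ : powIdeal σ (e + 1) ≤ J) (hL : ∑ j, X j ∈ J)
    {f : MvPolynomial σ ℚ} (hf : f.IsHomogeneous μ) : f ∈ J := by
  have hs : (∑ j, (X j : MvPolynomial σ ℚ)).IsHomogeneous 1 :=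
    IsHomogeneous.sum _ _ _ fun i _ => isHomogeneous_X _ i
  refine mem_of_pow_mul_mem_s4 e hμ hJ hL (Fintype.card σ * e + 1) f hf ?_
  exact mem_powIdeal_of_lt e (by omega) ((hs.pow _).mul hf)

end Vanishing

/-- The substitution `x₀ ↦ -(x₁ + ⋯ + x_n)` identifies `ℚ[x₀, …, x_n] / (x_i ^ d, x₀ + ⋯ + x_n)`
with the quotient by `lefIdeal n d`; the variable `x₀` is indexed by `none`. -/
lemma mem_lefIdeal_of_lt (n e : ℕ) {μ : ℕ} (hμ : (n + 1) * e < 2 * μ)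
    {p : MvPolynomial (Fin n) ℚ} (hp : p.IsHomogeneous μ) : p ∈ lefIdeal n (e + 1) := by
  let φ : MvPolynomial (Option (Fin n)) ℚ →ₐ[ℚ] MvPolynomial (Fin n) ℚ :=
    aeval fun o => o.elim (-∑ j, X j) X
  have hφ : φ (rename some p) = p := by
    simp only [φ, aeval_rename]
    exact aeval_X_left_apply p
  have hmem : rename some p ∈ (lefIdeal n (e + 1)).comap φ := by
    refine mem_of_two_mul_lt e (by simpa using hμ) ?_ ?_ hp.rename_isHomogeneous
    · rw [powIdeal, Ideal.span_le]
      rintro _ ⟨_ | j, rfl⟩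
      · have h : (∑ j, (X j : MvPolynomial (Fin n) ℚ)) ^ (e + 1) ∈ lefIdeal n (e + 1) :=
          Ideal.subset_span (Or.inr rfl)
        have := (lefIdeal n (e + 1)).mul_mem_left ((-1) ^ (e + 1)) h
        simpa [φ, ← mul_pow] using this
      · have h : (X j : MvPolynomial (Fin n) ℚ) ^ (e + 1) ∈ lefIdeal n (e + 1) :=
          Ideal.subset_span (Or.inl ⟨j, rfl⟩)
        simpa [φ] using h
    · simp [φ, Fintype.sum_option]
  rwa [Ideal.mem_comap, hφ] at hmem

/-! ### The apolarity pairing -/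

section Apolarity

variable {σ : Type*} [Fintype σ]

/-- The apolarity functional `p ↦ (p(∂) F)(0)`, given on monomials by
`x ^ α ↦ α! · coeff α F`. -/
def apolar (F : MvPolynomial σ ℚ) : MvPolynomial σ ℚ →ₗ[ℚ] ℚ :=
  (basisMonomials σ ℚ).constr ℚ fun α => (∏ i, ((α i).factorial : ℚ)) * coeff α F

lemma apolar_monomial (F : MvPolynomial σ ℚ) (α : σ →₀ ℕ) (a : ℚ) :
    apolar F (monomial α a) = a * ((∏ i, ((α i).factorial : ℚ)) * coeff α F) := by
  have h : (monomial α a : MvPolynomial σ ℚ) = a • basisMonomials σ ℚ α := by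
    simp [smul_monomial]
  rw [h, map_smul, apolar, Module.Basis.constr_basis, smul_eq_mul]

lemma apolar_zero : apolar (0 : MvPolynomial σ ℚ) = 0 := by
  refine (basisMonomials σ ℚ).ext fun α => ?_
  simp [apolar_monomial]

/-- Multiplication by a variable is adjoint to the partial derivative. -/
lemma apolar_mul_X (F p : MvPolynomial σ ℚ) (j : σ) :
    apolar F (p * X j) = apolar (pderiv j F) p := by
  classical
  induction p using MvPolynomial.induction_on' with
  | add p q hp hq => rw [add_mul, map_add, map_add, hp, hq]
  | monomial α a =>
    rw [X, monomial_mul, mul_one, apolar_monomial, apolar_monomial, coeff_pderiv]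
    have h : ∏ i, (((α + Finsupp.single j 1 : σ →₀ ℕ) i).factorial : ℚ)
        = (∏ i, ((α i).factorial : ℚ)) * (α j + 1) := by
      rw [← Finset.mul_prod_erase _ _ (Finset.mem_univ j),
        ← Finset.mul_prod_erase (a := j) _ (fun i => ((α i).factorial : ℚ)) (Finset.mem_univ j)]
      have h' : ∏ i ∈ Finset.univ.erase j, (((α + Finsupp.single j 1 : σ →₀ ℕ) i).factorial : ℚ)
          = ∏ i ∈ Finset.univ.erase j, ((α i).factorial : ℚ) :=
        Finset.prod_congr rfl fun i hi => by
          simp [(Finset.ne_of_mem_erase hi).symm]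
      rw [h']
      simp [Nat.factorial_succ]
      ring
    rw [h]
    ring

/-- The directional derivative `∑ j, ∂_j`. -/
def totalDeriv (σ : Type*) [Fintype σ] :
    Derivation ℚ (MvPolynomial σ ℚ) (MvPolynomial σ ℚ) :=
  mkDerivation ℚ fun _ => 1

lemma totalDeriv_apply (F : MvPolynomial σ ℚ) : totalDeriv σ F = ∑ j, pderiv j F := by
  classical
  have h : totalDeriv σ = ∑ j, pderiv j := by
    refine derivation_ext fun i => ?_
    rw [← Derivation.coeFnAddMonoidHom_apply (∑ j, pderiv j), map_sum]
    simp [totalDeriv, mkDerivation_X, Pi.single_apply]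
  rw [h, ← Derivation.coeFnAddMonoidHom_apply, map_sum]
  simp

lemma apolar_add (F G : MvPolynomial σ ℚ) : apolar (F + G) = apolar F + apolar G := by
  refine (basisMonomials σ ℚ).ext fun α => ?_
  simp [apolar_monomial, mul_add]

lemma apolar_sum {ι : Type*} (s : Finset ι) (F : ι → MvPolynomial σ ℚ) :
    apolar (∑ i ∈ s, F i) = ∑ i ∈ s, apolar (F i) :=
  map_sum (⟨⟨apolar, apolar_zero⟩, apolar_add⟩ : MvPolynomial σ ℚ →+ _) F s

lemma apolar_mul_sum (F p : MvPolynomial σ ℚ) :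
    apolar F (p * ∑ j, X j) = apolar (totalDeriv σ F) p := by
  rw [Finset.mul_sum, map_sum, totalDeriv_apply, apolar_sum]
  simp [apolar_mul_X]

/-- If multiplication by `g` is adjoint to `δ`, then multiplication by `g ^ d` is adjoint
to `δ ^ d`. -/
lemma apolar_mul_pow {g : MvPolynomial σ ℚ} {δ : MvPolynomial σ ℚ → MvPolynomial σ ℚ}
    (h : ∀ F p, apolar F (p * g) = apolar (δ F) p) (d : ℕ) :
    ∀ F p, apolar F (p * g ^ d) = apolar (δ^[d] F) p := by
  induction d with
  | zero => simp
  | succ d ih => intro F p; rw [pow_succ, ← mul_assoc, h, ih, Function.iterate_succ_apply]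

end Apolarity

/-! ### The order of nilpotency of a derivation -/

section Nilpotency

variable {A : Type*} [CommRing A] [Algebra ℚ A] (δ : Derivation ℚ A A)

lemma iterate_zero' (k : ℕ) : δ^[k] 0 = 0 := by
  induction k with
  | zero => rfl
  | succ k ih => rw [Function.iterate_succ_apply, map_zero, ih]

lemma iterate_add' (k : ℕ) : ∀ f g : A, δ^[k] (f + g) = δ^[k] f + δ^[k] g := by
  induction k with
  | zero => simp
  | succ k ih => intro f g; simp only [Function.iterate_succ_apply, map_add, ih]

/-- The degree with respect to a derivation (the least `a` with `δ ^ (a + 1) f = 0`) is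
subadditive on products. The parameter `s = a + b` carries the induction. -/
lemma iterate_mul_eq_zero (s : ℕ) : ∀ (a b : ℕ) (f g : A), a + b = s → δ^[a + 1] f = 0 →
    δ^[b + 1] g = 0 → δ^[a + b + 1] (f * g) = 0 := by
  induction s with
  | zero =>
    intro a b f g h hf hg
    obtain ⟨rfl, rfl⟩ : a = 0 ∧ b = 0 := by omega
    simp only [zero_add, Function.iterate_one] at hf hg ⊢
    rw [Derivation.leibniz, hf, hg]
    simp
  | succ s ih =>
    intro a b f g h hf hg
    rw [Function.iterate_succ_apply, Derivation.leibniz, iterate_add', smul_eq_mul, smul_eq_mul]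
    have h1 : δ^[a + b] (f * δ g) = 0 := by
      rcases b with _ | b
      · simp only [zero_add, Function.iterate_one] at hg
        rw [hg, mul_zero, iterate_zero']
      · exact ih a b f (δ g) (by omega) hf (by rwa [← Function.iterate_succ_apply])
    have h2 : δ^[a + b] (g * δ f) = 0 := by
      rcases a with _ | a
      · simp only [zero_add, Function.iterate_one] at hf
        rw [hf, mul_zero, iterate_zero']
      · have := ih b a g (δ f) (by omega) hg (by rwa [← Function.iterate_succ_apply])
        rwa [show a + 1 + b = b + a + 1 by omega]
    rw [h1, h2, add_zero]

lemma iterate_pow_eq_zero {a : ℕ} {f : A} (hf : δ^[a + 1] f = 0) (k : ℕ) :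
    δ^[a * k + 1] (f ^ k) = 0 := by
  induction k with
  | zero => simp
  | succ k ih => rw [pow_succ, mul_add_one]; exact iterate_mul_eq_zero δ _ _ _ _ _ rfl ih hf

lemma iterate_prod_pow_eq_zero {f : ℕ → A} {a : ℕ → ℕ} (k : ℕ → ℕ)
    (h : ∀ i, δ^[a i + 1] (f i) = 0) (s : Finset ℕ) :
    δ^[∑ i ∈ s, a i * k i + 1] (∏ i ∈ s, f i ^ k i) = 0 := by
  induction s using Finset.cons_induction with
  | empty => simp
  | cons i s hi ih =>
    rw [Finset.prod_cons, Finset.sum_cons]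
    exact iterate_mul_eq_zero δ _ _ _ _ _ rfl (iterate_pow_eq_zero δ (h i) _) ih

end Nilpotency

/-! ### A nonzero element in the middle degree -/

/-- The sequence `0, x₁, …, x_n, 0, 0, …`; here `x_i` is the variable with index `i - 1`. -/
def pathVar (n i : ℕ) : MvPolynomial (Fin n) ℚ :=
  if h : 0 < i ∧ i ≤ n then X ⟨i - 1, by omega⟩ else 0

/-- The exponents `⌊e/2⌋, ⌈e/2⌉, ⌊e/2⌋, …`; consecutive ones add up to `e`. -/
def pathExp (e i : ℕ) : ℕ := (e + i % 2) / 2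

/-- The product of powers of the differences of consecutive entries of `0, x₁, …, x_n, 0`. -/
def pathPoly (n e : ℕ) : MvPolynomial (Fin n) ℚ :=
  ∏ i ∈ Finset.range (n + 1), (pathVar n i - pathVar n (i + 1)) ^ pathExp e i

lemma sum_pathExp (e m : ℕ) : ∑ i ∈ Finset.range m, pathExp e i = m * e / 2 := by
  induction m with
  | zero => simp
  | succ m ih =>
    rw [Finset.sum_range_succ, ih, pathExp]
    rcases Nat.even_or_odd' m with ⟨t, rfl | rfl⟩
    · have h1 : 2 * t * e = 2 * (t * e) := by ring
      have h2 : (2 * t + 1) * e = 2 * (t * e) + e := by ring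
      omega
    · have h1 : (2 * t + 1) * e = 2 * (t * e) + e := by ring
      have h2 : (2 * t + 1 + 1) * e = 2 * (t * e) + 2 * e := by ring
      omega

lemma isHomogeneous_pathPoly (n e : ℕ) : (pathPoly n e).IsHomogeneous ((n + 1) * e / 2) := by
  have hv (i : ℕ) : (pathVar n i).IsHomogeneous 1 := by
    unfold pathVar
    split_ifs
    · exact isHomogeneous_X _ _
    · exact isHomogeneous_zero _ _ _
  rw [← sum_pathExp]
  refine IsHomogeneous.prod _ _ _ fun i _ => ?_
  simpa using ((hv i).sub (hv (i + 1))).pow (pathExp e i)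

lemma pathPoly_ne_zero {n : ℕ} (hn : 1 ≤ n) (e : ℕ) : pathPoly n e ≠ 0 := by
  refine Finset.prod_ne_zero_iff.2 fun i hi => pow_ne_zero _ (sub_ne_zero.2 ?_)
  have hi' : i ≤ n := by simpa [Nat.lt_succ_iff] using hi
  unfold pathVar
  split_ifs with h1 h2 h2
  · rw [Ne, X_inj, Fin.mk.injEq]
    omega
  · exact X_ne_zero _
  · exact (X_ne_zero _).symm
  · omega

lemma pderiv_pathVar {n : ℕ} (j : Fin n) (i : ℕ) :
    pderiv j (pathVar n i) = if i = j + 1 then 1 else 0 := by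
  have := j.isLt
  unfold pathVar
  split_ifs with h1 h2 h2
  · have : (⟨i - 1, by omega⟩ : Fin n) = j := Fin.ext (by simp; omega)
    rw [this, pderiv_X_self]
  · exact pderiv_X_of_ne fun h => h2 (by rw [← h]; simp; omega)
  · omega
  · exact map_zero _

lemma totalDeriv_pathVar (n i : ℕ) :
    totalDeriv (Fin n) (pathVar n i) = if 0 < i ∧ i ≤ n then 1 else 0 := by
  unfold pathVar
  split_ifs with h
  · simp [totalDeriv, mkDerivation_X]
  · exact map_zero _

/-- The two factors of `pathPoly` involving `x_j` have exponents adding up to `e`. -/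
lemma iterate_pderiv_pathPoly {n : ℕ} (e : ℕ) (j : Fin n) :
    (pderiv j)^[e + 1] (pathPoly n e) = 0 := by
  have hj := j.isLt
  have h := iterate_prod_pow_eq_zero (pderiv j) (pathExp e)
    (f := fun i => pathVar n i - pathVar n (i + 1))
    (a := fun i => if i = j ∨ i = j + 1 then 1 else 0) (fun i => by
      split_ifs with h
      · simp only [Function.iterate_succ_apply, Function.iterate_zero, id, map_sub,
          pderiv_pathVar]
        split_ifs <;> simp
      · simp only [Function.iterate_succ_apply, Function.iterate_zero, id, map_sub,
          pderiv_pathVar]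
        rw [if_neg (by omega), if_neg (by omega), sub_zero]) (Finset.range (n + 1))
  have hs : ∑ i ∈ Finset.range (n + 1), (if i = (j : ℕ) ∨ i = j + 1 then 1 else 0) * pathExp e i
      = e := by
    rw [← Finset.sum_subset (s₁ := {(j : ℕ), (j : ℕ) + 1})]
    · rw [Finset.sum_pair (by omega)]
      simp [pathExp]
      omega
    · intro i hi
      simp at hi ⊢
      omega
    · intro i _ hi
      simp at hi
      simp [hi]
  rw [hs] at h
  exact h

/-- Only the two extreme factors `-x₁` and `x_n` of `pathPoly` are not translation invariant. -/
lemma iterate_totalDeriv_pathPoly {n : ℕ} (hn : 1 ≤ n) (e : ℕ) :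
    (totalDeriv (Fin n))^[e + 1] (pathPoly n e) = 0 := by
  have h := iterate_prod_pow_eq_zero (totalDeriv (Fin n)) (pathExp e)
    (f := fun i => pathVar n i - pathVar n (i + 1))
    (a := fun i => if i = 0 ∨ i = n then 1 else 0) (fun i => by
      split_ifs with h
      · simp only [Function.iterate_succ_apply, Function.iterate_zero, id, map_sub,
          totalDeriv_pathVar]
        split_ifs <;> simp
      · simp only [Function.iterate_succ_apply, Function.iterate_zero, id, map_sub,
          totalDeriv_pathVar]
        split_ifs <;> first | omega | simp) (Finset.range (n + 1))
  have hs : ∑ i ∈ Finset.range (n + 1), (if i = 0 ∨ i = n then 1 else 0) * pathExp e i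
      ≤ e := by
    rw [← Finset.sum_subset (s₁ := {0, n})]
    · rw [Finset.sum_pair (by omega)]
      simp [pathExp]
      omega
    · intro i hi
      simp at hi ⊢
      omega
    · intro i _ hi
      simp at hi
      simp [hi]
  obtain ⟨t, ht⟩ := Nat.exists_eq_add_of_le hs
  rw [show e + 1 = t + (∑ i ∈ Finset.range (n + 1),
    (if i = 0 ∨ i = n then 1 else 0) * pathExp e i + 1) by omega, Function.iterate_add_apply]
  refine (congrArg _ h).trans (iterate_zero' _ _)

/-- The apolarity functional of `pathPoly` vanishes on the ideal. -/
lemma apolar_pathPoly_eq_zero {n : ℕ} (hn : 1 ≤ n) (e : ℕ) {p : MvPolynomial (Fin n) ℚ}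
    (hp : p ∈ lefIdeal n (e + 1)) : apolar (pathPoly n e) p = 0 := by
  suffices h : ∀ q, apolar (pathPoly n e) (q * p) = 0 by simpa using h 1
  induction hp using Submodule.span_induction with
  | zero => simp
  | add f g _ _ hf hg => intro q; rw [mul_add, map_add, hf, hg, add_zero]
  | smul r f _ hf => intro q; rw [smul_eq_mul, ← mul_assoc]; exact hf _
  | mem f hf =>
    intro q
    rcases hf with ⟨j, rfl⟩ | rfl
    · simp only
      rw [apolar_mul_pow (δ := pderiv j) (fun F p => apolar_mul_X F p j),
        iterate_pderiv_pathPoly, apolar_zero, LinearMap.zero_apply]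
    · rw [apolar_mul_pow (δ := totalDeriv (Fin n)) apolar_mul_sum,
        iterate_totalDeriv_pathPoly hn, apolar_zero, LinearMap.zero_apply]

/-- `end(B) = ⌊(n+1)(d-1)/2⌋` for `B = ℚ[x₁,…,x_n]/(x₁^d,…,x_n^d,(x₁+⋯+x_n)^d)`:
the component of degree `⌊(n+1)(d-1)/2⌋` is nonzero (there is a homogeneous polynomial of
that degree not in the ideal), and every component of larger degree vanishes (every
homogeneous polynomial of degree `> ⌊(n+1)(d-1)/2⌋` lies in the ideal). -/
theorem end_lef (n d : ℕ) (hn : 1 ≤ n) (hd : 1 ≤ d) :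
    (∃ p : MvPolynomial (Fin n) ℚ,
      p.IsHomogeneous ((n + 1) * (d - 1) / 2) ∧ p ∉ lefIdeal n d) ∧
    (∀ μ : ℕ, (n + 1) * (d - 1) / 2 < μ →
      ∀ p : MvPolynomial (Fin n) ℚ, p.IsHomogeneous μ → p ∈ lefIdeal n d) := by
  obtain ⟨e, rfl⟩ : ∃ e, d = e + 1 := ⟨d - 1, by omega⟩
  rw [Nat.add_sub_cancel]
  refine ⟨?_, fun μ hμ p hp => mem_lefIdeal_of_lt n e (by omega) hp⟩
  -- Any monomial occurring in `pathPoly n e` pairs nontrivially with it.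
  obtain ⟨α, hα⟩ := ne_zero_iff.1 (pathPoly_ne_zero hn e)
  refine ⟨monomial α 1, isHomogeneous_monomial _ ?_, fun hmem => ?_⟩
  · by_contra h
    exact hα ((isHomogeneous_pathPoly n e).coeff_eq_zero h)
  · have h := apolar_pathPoly_eq_zero hn e hmem
    rw [apolar_monomial, one_mul] at h
    refine mul_ne_zero (Finset.prod_ne_zero_iff.2 fun i _ => ?_) hα h
    exact_mod_cast Nat.factorial_ne_zero _

end
end
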